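/- arXiv:1705.03300 — 2 statements merged into one kernel-verified Lean document; each statement's English description precedes it below -/
import Mathlib

section
/- Let X be a set, H a Hilbert space, A ⊆ B(H) a non-degenerate C*-algebra, and φ : X×X → CB(A, B(H)) a bounded function. The following are equivalent: (i) φ is of positive type; (ii) φ is a Schur A-multiplier, S_φ is completely positive as a map from K(ℓ²(X))⊗A to K(ℓ²(X))⊗B(H), and ||S_φ||_cb = sup_{x∈X} ||φ(x,x)||_cb; (iii) there exist a Hilbert space K, a non-degenerate *-representation ρ : A → B(K), and a bounded function V : X → B(H,K) such that φ(x,y)(a) = V(x)* ρ(a) V(y) for all x,y ∈ X and a ∈ A. Moreover, if these conditions hold then the canonical extension of S_φ to a map on B(ℓ²(X)) ⊗̄ B(H) is also completely positive. -/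
noncomputable section

open scoped ComplexOrder
open Matrix
open scoped ENNReal

/-- Positivity of a matrix over a (possibly non-unital) C*-algebra:
`M` is positive iff it factors as `Nᴴ * N`. -/
def MatPos {R : Type*} [NonUnitalSemiring R] [StarRing R] {ν : Type*} [Fintype ν]
    (M : Matrix ν ν R) : Prop :=
  ∃ N : Matrix ν ν R, M = Nᴴ * N

/-- A linear map between C*-algebras is completely positive if all its matrix
amplifications preserve positivity. -/
def IsCompletelyPositive {R S : Type*} [NonUnitalSemiring R] [StarRing R] [Module ℂ R]
    [NonUnitalSemiring S] [StarRing S] [Module ℂ S] (Φ : R →ₗ[ℂ] S) : Prop :=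
  ∀ (n : ℕ) (M : Matrix (Fin n) (Fin n) R), MatPos M → MatPos (M.map Φ)

variable {H : Type*} [NormedAddCommGroup H] [InnerProductSpace ℂ H] [CompleteSpace H]

/-- The bounded operator on the Hilbert space `H ⊕₂ ⋯ ⊕₂ H` associated to an
operator-valued `n × n` matrix. -/
def matOp {ν : Type*} [Fintype ν] (M : Matrix ν ν (H →L[ℂ] H)) :
    PiLp 2 (fun _ : ν => H) →L[ℂ] PiLp 2 (fun _ : ν => H) :=
  ((PiLp.continuousLinearEquiv 2 ℂ (fun _ : ν => H)).symm :
      (∀ _ : ν, H) →L[ℂ] PiLp 2 (fun _ : ν => H)) ∘L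
    (ContinuousLinearMap.pi fun i =>
      (∑ j, (M i j) ∘L (ContinuousLinearMap.proj j)) ∘L
        ((PiLp.continuousLinearEquiv 2 ℂ (fun _ : ν => H)) :
          PiLp 2 (fun _ : ν => H) →L[ℂ] ∀ _ : ν, H))

variable {H : Type*} [NormedAddCommGroup H] [InnerProductSpace ℂ H] [CompleteSpace H]
variable {X : Type*}

/-- Evaluation at a point, as a continuous linear map `ℓ²(X,H) → H`. -/
def lpEval (x : X) : lp (fun _ : X => H) 2 →L[ℂ] H :=
  LinearMap.mkContinuous
    { toFun := fun f => f x
      map_add' := fun f g => by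
        have := lp.coeFn_add f g
        exact congrFun this x
      map_smul' := fun c f => by
        have := lp.coeFn_smul c f
        exact congrFun this x }
    1 (fun f => by
      simpa using lp.norm_apply_le_norm (by norm_num) f x)

/-- Inclusion of the `x`-th coordinate, as a continuous linear map `H → ℓ²(X,H)`. -/
def lpSingle (x : X) : H →L[ℂ] lp (fun _ : X => H) 2 := by
  classical
  exact LinearMap.mkContinuous
    { toFun := fun ξ => lp.single 2 x ξ
      map_add' := fun ξ η => by
        apply lp.ext
        funext j
        by_cases h : j = x
        · subst h; simp [lp.single_apply_self]
        · simp [lp.single_apply_ne _ _ _ h, lp.coeFn_add]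
      map_smul' := fun c ξ => by simp [lp.single_smul] }
    1 (fun ξ => by
      simpa using (lp.norm_single (p := 2) (by norm_num)
        (fun _ : X => ξ) x).le)

/-- The elementary operator `e_{x,y} ⊗ T` on `ℓ²(X,H)`. -/
def elemOp (x y : X) (T : H →L[ℂ] H) :
    lp (fun _ : X => H) 2 →L[ℂ] lp (fun _ : X => H) 2 :=
  (lpSingle x) ∘L T ∘L (lpEval y)

/-- The operator `T_k` on `ℓ²(X,H)` associated with a finitely supported kernel
`k : X × X → B(H)`; it is (defined to be) `0` if `k` is not finitely supported. -/
def TOp (k : X × X → (H →L[ℂ] H)) :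
    lp (fun _ : X => H) 2 →L[ℂ] lp (fun _ : X => H) 2 :=
  ∑ᶠ (p : X × X), elemOp p.1 p.2 (k p)

variable {G : Type*} [Group G]

/-- The left regular translation `λ_t` on `ℓ²(G,H)`. -/
def lam (t : G) : lp (fun _ : G => H) 2 →L[ℂ] lp (fun _ : G => H) 2 :=
  LinearMap.mkContinuous
    { toFun := fun f =>
        ⟨fun s => f (t⁻¹ * s), by
          apply memℓp_gen
          have hf : Summable fun s => ‖f s‖ ^ (2 : ℝ≥0∞).toReal :=
            (lp.memℓp f).summable (by norm_num)
          exact ((Equiv.mulLeft t⁻¹).summable_iff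
            (f := fun s => ‖f s‖ ^ (2 : ℝ≥0∞).toReal)).2 hf⟩
      map_add' := fun f g => by
        apply lp.ext; funext s
        exact congrFun (lp.coeFn_add f g) (t⁻¹ * s)
      map_smul' := fun c f => by
        apply lp.ext; funext s
        exact congrFun (lp.coeFn_smul c f) (t⁻¹ * s) }
    1 (fun f => by
      rw [one_mul]
      refine lp.norm_le_of_tsum_le (by norm_num) (norm_nonneg f) ?_
      have h1 : ∑' (s : G), ‖f (t⁻¹ * s)‖ ^ (2 : ℝ≥0∞).toReal
          = ∑' (s : G), ‖f s‖ ^ (2 : ℝ≥0∞).toReal :=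
        (Equiv.mulLeft t⁻¹).tsum_eq (fun s => ‖f s‖ ^ (2 : ℝ≥0∞).toReal)
      show ∑' (s : G), ‖f (t⁻¹ * s)‖ ^ (2 : ℝ≥0∞).toReal ≤ ‖f‖ ^ (2 : ℝ≥0∞).toReal
      rw [h1, ← lp.norm_rpow_eq_tsum (by norm_num) f])

/-- The diagonal ("block multiplication") operator on `ℓ²(X,H)` associated with a
uniformly bounded family of operators. -/
def diagOp (T : X → (H →L[ℂ] H)) (C : ℝ) (hC : ∀ x, ‖T x‖ ≤ C) :
    lp (fun _ : X => H) 2 →L[ℂ] lp (fun _ : X => H) 2 := by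
  have hC' : ∀ x, ‖T x‖ ≤ max C 0 := fun x => (hC x).trans (le_max_left _ _)
  have hr : (0:ℝ) < (2 : ℝ≥0∞).toReal := by norm_num
  have key : ∀ (f : lp (fun _ : X => H) 2) (x : X),
      ‖T x (f x)‖ ^ (2 : ℝ≥0∞).toReal
        ≤ (max C 0) ^ (2 : ℝ≥0∞).toReal * ‖f x‖ ^ (2 : ℝ≥0∞).toReal := by
    intro f x
    have h1 : ‖T x (f x)‖ ≤ max C 0 * ‖f x‖ :=
      ((T x).le_opNorm (f x)).trans
        (mul_le_mul_of_nonneg_right (hC' x) (norm_nonneg _))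
    calc ‖T x (f x)‖ ^ (2 : ℝ≥0∞).toReal
        ≤ (max C 0 * ‖f x‖) ^ (2 : ℝ≥0∞).toReal :=
          Real.rpow_le_rpow (norm_nonneg _) h1 hr.le
      _ = (max C 0) ^ (2 : ℝ≥0∞).toReal * ‖f x‖ ^ (2 : ℝ≥0∞).toReal :=
          Real.mul_rpow (le_max_right _ _) (norm_nonneg _)
  have mem : ∀ f : lp (fun _ : X => H) 2, Memℓp (fun x => T x (f x)) 2 := by
    intro f
    apply memℓp_gen
    exact Summable.of_nonneg_of_le
      (fun x => Real.rpow_nonneg (norm_nonneg _) _) (key f)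
      (((lp.memℓp f).summable hr).mul_left _)
  exact LinearMap.mkContinuous
    { toFun := fun f => ⟨fun x => T x (f x), mem f⟩
      map_add' := fun f g => by
        apply lp.ext; funext x
        have := congrFun (lp.coeFn_add f g) x
        show T x ((f + g) x) = _
        rw [this]
        exact map_add (T x) (f x) (g x)
      map_smul' := fun c f => by
        apply lp.ext; funext x
        have := congrFun (lp.coeFn_smul c f) x
        show T x ((c • f) x) = _
        rw [this]
        simp [lp.coeFn_smul] }
    (max C 0) (fun f => by
      refine lp.norm_le_of_tsum_le hr (by positivity) ?_
      show ∑' (x : X), ‖T x (f x)‖ ^ (2 : ℝ≥0∞).toReal ≤ _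
      calc ∑' (x : X), ‖T x (f x)‖ ^ (2 : ℝ≥0∞).toReal
          ≤ ∑' (x : X), (max C 0) ^ (2 : ℝ≥0∞).toReal * ‖f x‖ ^ (2 : ℝ≥0∞).toReal :=
            Summable.tsum_le_tsum (key f)
              (Summable.of_nonneg_of_le
                (fun x => Real.rpow_nonneg (norm_nonneg _) _) (key f)
                (((lp.memℓp f).summable hr).mul_left _))
              (((lp.memℓp f).summable hr).mul_left _)
        _ = (max C 0) ^ (2 : ℝ≥0∞).toReal * ∑' (x : X), ‖f x‖ ^ (2 : ℝ≥0∞).toReal :=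
            tsum_mul_left
        _ = (max C 0) ^ (2 : ℝ≥0∞).toReal * ‖f‖ ^ (2 : ℝ≥0∞).toReal := by
            rw [lp.norm_rpow_eq_tsum hr]
        _ = (max C 0 * ‖f‖) ^ (2 : ℝ≥0∞).toReal :=
            (Real.mul_rpow (by positivity) (norm_nonneg _)).symm)

section CB

variable {A' B' : Type*} [AddCommMonoid A'] [Module ℂ A'] [AddCommMonoid B'] [Module ℂ B']
variable {K : Type*} [NormedAddCommGroup K] [InnerProductSpace ℂ K] [CompleteSpace K]

/-- All matrix amplifications of `Φ` are bounded by `C`, where matrices over the abstract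
spaces are normed through the given embeddings into concrete operator algebras. -/
def CBBound (ιA : A' → (H →L[ℂ] H)) (ιB : B' → (K →L[ℂ] K))
    (Φ : A' →ₗ[ℂ] B') (C : ℝ) : Prop :=
  ∀ (n : ℕ) (M : Matrix (Fin n) (Fin n) A'),
    ‖matOp (M.map (fun a => ιB (Φ a)))‖ ≤ C * ‖matOp (M.map ιA)‖

/-- Complete boundedness of a linear map, relative to embeddings of its domain and
codomain into concrete operator algebras. -/
def IsCB (ιA : A' → (H →L[ℂ] H)) (ιB : B' → (K →L[ℂ] K)) (Φ : A' →ₗ[ℂ] B') : Prop :=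
  ∃ C : ℝ, 0 ≤ C ∧ CBBound ιA ιB Φ C

/-- The completely bounded norm of a linear map, relative to embeddings of its domain
and codomain into concrete operator algebras. -/
def cbNorm (ιA : A' → (H →L[ℂ] H)) (ιB : B' → (K →L[ℂ] K)) (Φ : A' →ₗ[ℂ] B') : ℝ :=
  sInf { C : ℝ | 0 ≤ C ∧ CBBound ιA ιB Φ C }

end CB

section Schur

variable {A : Type*} [NonUnitalCStarAlgebra A]

/-- A *-representation is non-degenerate if the span of the vectors in its range is dense. -/
def NondegenerateRep {K : Type*} [NormedAddCommGroup K] [InnerProductSpace ℂ K]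
    [CompleteSpace K] (ρ : A →⋆ₙₐ[ℂ] (K →L[ℂ] K)) : Prop :=
  Dense (Submodule.span ℂ {ξ : K | ∃ (a : A) (v : K), ρ a v = ξ} : Set K)

/-- A function `φ : X × X → CB(A, B(H))` is of positive type if it maps positive
matrices to positive matrices, entrywise. -/
def PositiveType (φ : X → X → (A →ₗ[ℂ] (H →L[ℂ] H))) : Prop :=
  ∀ (m : ℕ) (x : Fin m → X) (a : Matrix (Fin m) (Fin m) A),
    MatPos a → MatPos (Matrix.of fun p q => φ (x p) (x q) (a p q))

/-- A kernel `k : X × X → A` is positive definite if all the matrices obtained by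
sampling it at finitely many points are positive. -/
def PosDefKernel (k : X × X → A) : Prop :=
  ∀ (n : ℕ) (x : Fin n → X), MatPos (Matrix.of fun i j => k (x i, x j))

/-- The operator `T_k` on `ℓ²(X,H)` of a kernel `k : X × X → A`, via the embedding
`ι : A → B(H)` (it is `0` unless `k` is finitely supported). -/
def TKer (ι : A →⋆ₙₐ[ℂ] (H →L[ℂ] H)) (k : X × X → A) :
    lp (fun _ : X => H) 2 →L[ℂ] lp (fun _ : X => H) 2 :=
  TOp (fun p => ι (k p))

/-- `C` is a complete bound for the Schur multiplication map `S_φ : T_k ↦ T_{φ·k}`,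
tested on (matrices of) finitely supported kernels, which span a dense subspace of
`K(ℓ²(X)) ⊗ A`. -/
def SchurBound (ι : A →⋆ₙₐ[ℂ] (H →L[ℂ] H)) (φ : X → X → (A →ₗ[ℂ] (H →L[ℂ] H)))
    (C : ℝ) : Prop :=
  ∀ (n : ℕ) (k : Fin n → Fin n → (X × X → A)),
    (∀ i j, (Function.support (k i j)).Finite) →
    ‖matOp (Matrix.of fun i j => TOp (fun p => φ p.1 p.2 (k i j p)))‖
      ≤ C * ‖matOp (Matrix.of fun i j => TKer ι (k i j))‖

/-- `φ` is a Schur `A`-multiplier: the map `S_φ : T_k ↦ T_{φ·k}` is completely bounded. -/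
def IsSchurMultiplier (ι : A →⋆ₙₐ[ℂ] (H →L[ℂ] H))
    (φ : X → X → (A →ₗ[ℂ] (H →L[ℂ] H))) : Prop :=
  ∃ C : ℝ, 0 ≤ C ∧ SchurBound ι φ C

/-- The multiplier norm `‖φ‖_m = ‖S_φ‖_cb` of a Schur `A`-multiplier. -/
def schurNorm (ι : A →⋆ₙₐ[ℂ] (H →L[ℂ] H))
    (φ : X → X → (A →ₗ[ℂ] (H →L[ℂ] H))) : ℝ :=
  sInf { C : ℝ | 0 ≤ C ∧ SchurBound ι φ C }

/-- Complete positivity of the map `S_φ : K(ℓ²(X)) ⊗ A → K(ℓ²(X)) ⊗ B(H)`, tested on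
(matrices of) finitely supported kernels. -/
def SchurCP (ι : A →⋆ₙₐ[ℂ] (H →L[ℂ] H)) (φ : X → X → (A →ₗ[ℂ] (H →L[ℂ] H))) : Prop :=
  ∀ (n : ℕ) (k : Fin n → Fin n → (X × X → A)),
    (∀ i j, (Function.support (k i j)).Finite) →
    MatPos (Matrix.of fun i j => TKer ι (k i j)) →
    MatPos (Matrix.of fun i j => TOp (fun p => φ p.1 p.2 (k i j p)))

end Schur

section Dynamics

variable {A : Type*} [NonUnitalCStarAlgebra A]

/-- `α` is an action of the group `G` on `A` by *-automorphisms. -/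
def IsAction (α : G → A ≃⋆ₐ[ℂ] A) : Prop :=
  (∀ a, α 1 a = a) ∧ ∀ s t : G, ∀ a : A, α (s * t) a = α s (α t a)

/-- A *-automorphism of `A`, as a `ℂ`-linear map. -/
def autLin (e : A ≃⋆ₐ[ℂ] A) : A →ₗ[ℂ] A :=
  { toFun := e
    map_add' := fun a b => map_add e a b
    map_smul' := fun c a => map_smul e c a }

/-- The representation `π` of `A` on `ℓ²(G,H)`: `(π(a)ξ)(s) = α_{s⁻¹}(a)(ξ(s))`. -/
def piRep (ι : A →⋆ₙₐ[ℂ] (H →L[ℂ] H)) (α : G → A ≃⋆ₐ[ℂ] A) (a : A) :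
    lp (fun _ : G => H) 2 →L[ℂ] lp (fun _ : G => H) 2 :=
  diagOp (fun s => ι (α s⁻¹ a)) ‖a‖ (fun s =>
    (NonUnitalStarAlgHom.norm_apply_le ι (α s⁻¹ a)).trans_eq
      (StarAlgEquiv.norm_map (α s⁻¹) a))

/-- The reduced crossed product `A ⋊_{α,r} G`, realised concretely on `ℓ²(G,H)` as the
norm closure of the linear span of the operators `π(a)λ_t`. -/
def CrossedSet (ι : A →⋆ₙₐ[ℂ] (H →L[ℂ] H)) (α : G → A ≃⋆ₐ[ℂ] A) :
    Set (lp (fun _ : G => H) 2 →L[ℂ] lp (fun _ : G => H) 2) :=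
  closure (Submodule.span ℂ
    {x | ∃ (a : A) (t : G), x = piRep ι α a * lam t} : Set _)

/-- `E` is the canonical conditional expectation of the reduced crossed product onto `A`:
it is characterised by `ι (E x) = (x)_{e,e}`, the `(e,e)` matrix entry of `x`. -/
def IsCondExp (ι : A →⋆ₙₐ[ℂ] (H →L[ℂ] H)) (α : G → A ≃⋆ₐ[ℂ] A)
    (E : (lp (fun _ : G => H) 2 →L[ℂ] lp (fun _ : G => H) 2) →ₗ[ℂ] A) : Prop :=
  ∀ x ∈ CrossedSet ι α, ι (E x) = (lpEval (1 : G)) ∘L x ∘L (lpSingle (1 : G))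

/-- The defining property of the map `S_F` associated with `F : G → CB(A)`:
`S_F(π(a)λ_s) = π(F(s)(a))λ_s`. -/
def HSGenProp (ι : A →⋆ₙₐ[ℂ] (H →L[ℂ] H)) (α : G → A ≃⋆ₐ[ℂ] A)
    (F : G → (A →ₗ[ℂ] A))
    (Φ : (lp (fun _ : G => H) 2 →L[ℂ] lp (fun _ : G => H) 2) →ₗ[ℂ]
         (lp (fun _ : G => H) 2 →L[ℂ] lp (fun _ : G => H) 2)) : Prop :=
  ∀ (a : A) (s : G), Φ (piRep ι α a * lam s) = piRep ι α (F s a) * lam s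

/-- `Φ` maps the reduced crossed product into itself and, on matrices over the reduced
crossed product, all amplifications of `Φ` are bounded by `C`. -/
def CBBoundOnCrossed (ι : A →⋆ₙₐ[ℂ] (H →L[ℂ] H)) (α : G → A ≃⋆ₐ[ℂ] A)
    (Φ : (lp (fun _ : G => H) 2 →L[ℂ] lp (fun _ : G => H) 2) →ₗ[ℂ]
         (lp (fun _ : G => H) 2 →L[ℂ] lp (fun _ : G => H) 2)) (C : ℝ) : Prop :=
  ∀ (n : ℕ) (M : Matrix (Fin n) (Fin n)
      (lp (fun _ : G => H) 2 →L[ℂ] lp (fun _ : G => H) 2)),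
    (∀ i j, M i j ∈ CrossedSet ι α) →
      ‖matOp (M.map Φ)‖ ≤ C * ‖matOp M‖

/-- `Φ` is completely positive on the reduced crossed product: matrices over the crossed
product which are positive are mapped to positive matrices. -/
def CPOnCrossed (ι : A →⋆ₙₐ[ℂ] (H →L[ℂ] H)) (α : G → A ≃⋆ₐ[ℂ] A)
    (Φ : (lp (fun _ : G => H) 2 →L[ℂ] lp (fun _ : G => H) 2) →ₗ[ℂ]
         (lp (fun _ : G => H) 2 →L[ℂ] lp (fun _ : G => H) 2)) : Prop :=
  (∀ x ∈ CrossedSet ι α, Φ x ∈ CrossedSet ι α) ∧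
  ∀ (n : ℕ) (M : Matrix (Fin n) (Fin n)
      (lp (fun _ : G => H) 2 →L[ℂ] lp (fun _ : G => H) 2)),
    (∀ i j, M i j ∈ CrossedSet ι α) → MatPos M → MatPos (M.map Φ)

/-- `F : G → CB(A)` is a Herz-Schur `(A,G,α)`-multiplier: the map `S_F` determined by
`S_F(π(a)λ_s) = π(F(s)(a))λ_s` extends to a completely bounded map on `A ⋊_{α,r} G`. -/
def IsHerzSchurMultiplier (ι : A →⋆ₙₐ[ℂ] (H →L[ℂ] H)) (α : G → A ≃⋆ₐ[ℂ] A)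
    (F : G → (A →ₗ[ℂ] A)) : Prop :=
  ∃ Φ, HSGenProp ι α F Φ ∧ (∀ x ∈ CrossedSet ι α, Φ x ∈ CrossedSet ι α) ∧
    ∃ C : ℝ, 0 ≤ C ∧ CBBoundOnCrossed ι α Φ C

/-- `F : G → CB(A)` is a completely positive Herz-Schur `(A,G,α)`-multiplier: the map
`S_F` extends to a completely positive (hence completely bounded) map on `A ⋊_{α,r} G`. -/
def IsHerzSchurMultiplierCP (ι : A →⋆ₙₐ[ℂ] (H →L[ℂ] H)) (α : G → A ≃⋆ₐ[ℂ] A)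
    (F : G → (A →ₗ[ℂ] A)) : Prop :=
  ∃ Φ, HSGenProp ι α F Φ ∧ CPOnCrossed ι α Φ ∧
    ∃ C : ℝ, 0 ≤ C ∧ CBBoundOnCrossed ι α Φ C

/-- The function `N(F) : G × G → CB(A)`, `N(F)(s,t)(a) = α_{s⁻¹}(F(st⁻¹)(α_s(a)))`. -/
def NF (α : G → A ≃⋆ₐ[ℂ] A) (F : G → (A →ₗ[ℂ] A)) : G → G → (A →ₗ[ℂ] A) :=
  fun s t => (autLin (α s⁻¹)) ∘ₗ (F (s * t⁻¹)) ∘ₗ (autLin (α s))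

end Dynamics

section Trace

variable {A : Type*} [NonUnitalCStarAlgebra A]

/-- `τ` is a positive linear functional. -/
def IsPositiveFunctional (τ : A →ₗ[ℂ] ℂ) : Prop :=
  ∀ a : A, 0 ≤ τ (star a * a)

/-- `τ` is tracial. -/
def IsTracial (τ : A →ₗ[ℂ] ℂ) : Prop :=
  ∀ a b : A, τ (a * b) = τ (b * a)

/-- `τ` is faithful. -/
def IsFaithfulFunctional (τ : A →ₗ[ℂ] ℂ) : Prop :=
  ∀ a : A, τ (star a * a) = 0 → a = 0

/-- The `L²`-norm `‖a‖_{2,τ} = τ(a*a)^{1/2}` associated with a positive functional `τ`. -/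
def l2norm (τ : A →ₗ[ℂ] ℂ) (a : A) : ℝ :=
  Real.sqrt (τ (star a * a)).re

/-- A map `Φ : A → A` is `L²`-bounded by `C` with respect to `τ`. -/
def L2BoundedBy (τ : A →ₗ[ℂ] ℂ) (Φ : A →ₗ[ℂ] A) (C : ℝ) : Prop :=
  ∀ a : A, l2norm τ (Φ a) ≤ C * l2norm τ a

/-- A map `Φ : A → A` is `L²`-bounded with respect to `τ`, i.e. it extends to a bounded
operator `T_Φ` on `L²(A,τ)`. -/
def L2Bounded (τ : A →ₗ[ℂ] ℂ) (Φ : A →ₗ[ℂ] A) : Prop :=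
  ∃ C : ℝ, 0 ≤ C ∧ L2BoundedBy τ Φ C

/-- The norm of the extension `T_Φ` of `Φ` to `L²(A,τ)`. -/
def l2OpNorm (τ : A →ₗ[ℂ] ℂ) (Φ : A →ₗ[ℂ] A) : ℝ :=
  sInf { C : ℝ | 0 ≤ C ∧ L2BoundedBy τ Φ C }

/-- `Φ` is `L²`-compact with respect to `τ`: the image under `Φ` of the `L²`-unit ball of
`A` is totally bounded in the `L²`-norm; equivalently, the extension `T_Φ` of `Φ` to
`L²(A,τ)` is a compact operator. -/
def L2Compact (τ : A →ₗ[ℂ] ℂ) (Φ : A →ₗ[ℂ] A) : Prop :=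
  ∀ ε : ℝ, 0 < ε → ∃ S : Finset A, ∀ a : A, l2norm τ a ≤ 1 →
    ∃ b ∈ S, l2norm τ (Φ a - b) < ε

end Trace

section Props

variable {A : Type*} [CStarAlgebra A]

/-- The pair `(A,τ)` has the C*-algebra Haagerup property (Definition 3.1, Dong). -/
def CStarHaagerup (τ : A →ₗ[ℂ] ℂ) : Prop :=
  ∃ (I : Type) (_ : Nonempty I) (_ : SemilatticeSup I) (Φ : I → (A →ₗ[ℂ] A)),
    (∀ i, Φ i 1 = 1) ∧
    (∀ i, IsCompletelyPositive (Φ i)) ∧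
    (∀ i (a : A), τ (Φ i (star a * a)) ≤ τ (star a * a)) ∧
    (∀ i, L2Compact τ (Φ i)) ∧
    (∀ a : A, Filter.Tendsto (fun i => l2norm τ (Φ i a - a)) Filter.atTop (nhds 0))

/-- `A` is a nuclear C*-algebra: there is a net of finite-rank completely positive
contractions converging to the identity in the point-norm topology. -/
def NuclearCStarAlgebra (A : Type*) [NonUnitalCStarAlgebra A] : Prop :=
  ∃ (I : Type) (_ : Nonempty I) (_ : SemilatticeSup I) (Φ : I → (A →ₗ[ℂ] A)),
    (∀ i, IsCompletelyPositive (Φ i)) ∧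
    (∀ i (a : A), ‖Φ i a‖ ≤ ‖a‖) ∧
    (∀ i, FiniteDimensional ℂ (LinearMap.range (Φ i))) ∧
    (∀ a : A, Filter.Tendsto (fun i => ‖Φ i a - a‖) Filter.atTop (nhds 0))

/-- A discrete group `G` has the Haagerup property: there is a net of normalised
positive-definite functions on `G`, vanishing at infinity, converging pointwise to `1`. -/
def GroupHaagerup (G : Type*) [Group G] : Prop :=
  ∃ (I : Type) (_ : Nonempty I) (_ : SemilatticeSup I) (φ : I → G → ℂ),
    (∀ i, φ i 1 = 1) ∧
    (∀ i (n : ℕ) (s : Fin n → G) (μ : Fin n → ℂ),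
      0 ≤ ∑ k, ∑ l, (starRingEnd ℂ) (μ k) * φ i ((s k)⁻¹ * s l) * μ l) ∧
    (∀ i, ∀ ε : ℝ, 0 < ε → ∃ S : Finset G, ∀ s ∉ S, ‖φ i s‖ ≤ ε) ∧
    (∀ s : G, Filter.Tendsto (fun i => φ i s) Filter.atTop (nhds 1))

end Props

section More

variable {A : Type*} [NonUnitalCStarAlgebra A]

/-- A star homomorphism, as a `ℂ`-linear map. -/
def iotaLin {B : Type*} [NonUnitalCStarAlgebra B] (ι : A →⋆ₙₐ[ℂ] B) : A →ₗ[ℂ] B :=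
  { toFun := ι
    map_add' := fun a b => map_add ι a b
    map_smul' := fun c a => map_smul ι c a }

/-- A function `φ : X × X → CB(A)` with values in the maps on `A` is of positive type. -/
def PositiveTypeA (φ : X → X → (A →ₗ[ℂ] A)) : Prop :=
  ∀ (m : ℕ) (x : Fin m → X) (a : Matrix (Fin m) (Fin m) A),
    MatPos a → MatPos (Matrix.of fun p q => φ (x p) (x q) (a p q))

/-- The representation `π` of `A` on `ℓ²(G,H)`, as a linear map. -/
def piRepLin (ι : A →⋆ₙₐ[ℂ] (H →L[ℂ] H)) (α : G → A ≃⋆ₐ[ℂ] A) :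
    A →ₗ[ℂ] (lp (fun _ : G => H) 2 →L[ℂ] lp (fun _ : G => H) 2) :=
  { toFun := piRep ι α
    map_add' := fun a b => by
      apply ContinuousLinearMap.ext; intro f
      apply lp.ext; funext s
      have h1 : (((piRep ι α a + piRep ι α b) f :
          lp (fun _ : G => H) 2) : ∀ _ : G, H) s
          = ((piRep ι α a f : ∀ _ : G, H) s) + ((piRep ι α b f : ∀ _ : G, H) s) := by
        rw [ContinuousLinearMap.add_apply]
        exact congrFun (lp.coeFn_add (piRep ι α a f) (piRep ι α b f)) s
      show ι (α s⁻¹ (a + b)) (f s) = _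
      rw [h1]
      show _ = ι (α s⁻¹ a) (f s) + ι (α s⁻¹ b) (f s)
      rw [map_add (α s⁻¹), map_add ι, ContinuousLinearMap.add_apply]
    map_smul' := fun c a => by
      apply ContinuousLinearMap.ext; intro f
      apply lp.ext; funext s
      have h1 : (((c • piRep ι α a) f :
          lp (fun _ : G => H) 2) : ∀ _ : G, H) s
          = c • ((piRep ι α a f : ∀ _ : G, H) s) := by
        rw [ContinuousLinearMap.smul_apply]
        exact congrFun (lp.coeFn_smul c (piRep ι α a f)) s
      show ι (α s⁻¹ (c • a)) (f s) = _
      rw [RingHom.id_apply, h1]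
      show _ = c • ι (α s⁻¹ a) (f s)
      rw [map_smul (α s⁻¹), map_smul ι, ContinuousLinearMap.smul_apply] }

/-- The completely bounded norm of a map defined on the reduced crossed product. -/
def cbNormOnCrossed (ι : A →⋆ₙₐ[ℂ] (H →L[ℂ] H)) (α : G → A ≃⋆ₐ[ℂ] A)
    (Φ : (lp (fun _ : G => H) 2 →L[ℂ] lp (fun _ : G => H) 2) →ₗ[ℂ]
         (lp (fun _ : G => H) 2 →L[ℂ] lp (fun _ : G => H) 2)) : ℝ :=
  sInf { C : ℝ | 0 ≤ C ∧ CBBoundOnCrossed ι α Φ C }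

/-- The `L²`-norm `‖x‖_{2,τ'}` on the reduced crossed product induced by the trace
`τ' = τ ∘ E`. -/
def l2normCr (τ : A →ₗ[ℂ] ℂ)
    (E : (lp (fun _ : G => H) 2 →L[ℂ] lp (fun _ : G => H) 2) →ₗ[ℂ] A)
    (x : lp (fun _ : G => H) 2 →L[ℂ] lp (fun _ : G => H) 2) : ℝ :=
  Real.sqrt (τ (E (star x * x))).re

/-- The map `h_Φ : G → CB(A)` associated with a map `Φ` on the reduced crossed product:
`h_Φ(s)(a) = E(Φ(π(a)λ_s)λ_s*)`. -/
def hMap (ι : A →⋆ₙₐ[ℂ] (H →L[ℂ] H)) (α : G → A ≃⋆ₐ[ℂ] A)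
    (E : (lp (fun _ : G => H) 2 →L[ℂ] lp (fun _ : G => H) 2) →ₗ[ℂ] A)
    (Φ : (lp (fun _ : G => H) 2 →L[ℂ] lp (fun _ : G => H) 2) →ₗ[ℂ]
         (lp (fun _ : G => H) 2 →L[ℂ] lp (fun _ : G => H) 2))
    (s : G) : A →ₗ[ℂ] A :=
  E ∘ₗ (LinearMap.mulRight ℂ (star (lam s))) ∘ₗ Φ ∘ₗ
    (LinearMap.mulRight ℂ (lam (H := H) s)) ∘ₗ piRepLin ι α

end More

section BigProps

open Filter

variable {A : Type*} [CStarAlgebra A]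

/-- The Haagerup property for the `C*`-dynamical system `(A,G,α,τ)` (Definition 3.3). -/
def DynHaagerup (ι : A →⋆ₙₐ[ℂ] (H →L[ℂ] H)) (α : G → A ≃⋆ₐ[ℂ] A)
    (τ : A →ₗ[ℂ] ℂ) : Prop :=
  ∃ (I : Type) (_ : Nonempty I) (_ : SemilatticeSup I) (F : I → G → (A →ₗ[ℂ] A)),
    (∀ i, IsHerzSchurMultiplierCP ι α (F i)) ∧
    (∀ i, F i 1 1 = 1) ∧
    (∀ i (a : A), τ (F i 1 (star a * a)) ≤ τ (star a * a)) ∧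
    (∀ i (t : G), L2Compact τ (F i t)) ∧
    (∀ i, ∀ ε : ℝ, 0 < ε → ∃ S : Finset G, ∀ s ∉ S, l2OpNorm τ (F i s) ≤ ε) ∧
    (∀ (t : G) (a : A),
      Tendsto (fun i => l2norm τ (F i t a - a)) atTop (nhds 0))

/-- The C*-algebra Haagerup property for the reduced crossed product `A ⋊_{α,r} G`
endowed with the induced trace `τ' = τ ∘ E` (Definition 3.1). -/
def CrossedCStarHaagerup (ι : A →⋆ₙₐ[ℂ] (H →L[ℂ] H)) (α : G → A ≃⋆ₐ[ℂ] A)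
    (τ : A →ₗ[ℂ] ℂ)
    (E : (lp (fun _ : G => H) 2 →L[ℂ] lp (fun _ : G => H) 2) →ₗ[ℂ] A) : Prop :=
  ∃ (I : Type) (_ : Nonempty I) (_ : SemilatticeSup I)
    (Φ : I → ((lp (fun _ : G => H) 2 →L[ℂ] lp (fun _ : G => H) 2) →ₗ[ℂ]
              (lp (fun _ : G => H) 2 →L[ℂ] lp (fun _ : G => H) 2))),
    (∀ i, Φ i 1 = 1) ∧
    (∀ i, CPOnCrossed ι α (Φ i)) ∧
    (∀ i, ∀ x ∈ CrossedSet ι α, τ (E (Φ i (star x * x))) ≤ τ (E (star x * x))) ∧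
    (∀ i, ∀ ε : ℝ, 0 < ε →
      ∃ S : Finset (lp (fun _ : G => H) 2 →L[ℂ] lp (fun _ : G => H) 2),
        ∀ x ∈ CrossedSet ι α, l2normCr τ E x ≤ 1 →
          ∃ b ∈ S, l2normCr τ E (Φ i x - b) < ε) ∧
    (∀ x ∈ CrossedSet ι α,
      Tendsto (fun i => l2normCr τ E (Φ i x - x)) atTop (nhds 0))

end BigProps

section Nuc

open Filter

variable {A : Type*} [NonUnitalCStarAlgebra A]

/-- Nuclearity of the reduced crossed product `A ⋊_{α,r} G`: there is a net of
finite-rank completely positive contractions on it converging to the identity in the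
point-norm topology. -/
def CrossedNuclear (ι : A →⋆ₙₐ[ℂ] (H →L[ℂ] H)) (α : G → A ≃⋆ₐ[ℂ] A) : Prop :=
  ∃ (I : Type) (_ : Nonempty I) (_ : SemilatticeSup I)
    (Φ : I → ((lp (fun _ : G => H) 2 →L[ℂ] lp (fun _ : G => H) 2) →ₗ[ℂ]
              (lp (fun _ : G => H) 2 →L[ℂ] lp (fun _ : G => H) 2))),
    (∀ i, CPOnCrossed ι α (Φ i)) ∧
    (∀ i, ∀ x ∈ CrossedSet ι α, ‖Φ i x‖ ≤ ‖x‖) ∧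
    (∀ i, FiniteDimensional ℂ
      (Submodule.span ℂ ((fun x => Φ i x) '' CrossedSet ι α))) ∧
    (∀ x ∈ CrossedSet ι α, Tendsto (fun i => ‖Φ i x - x‖) atTop (nhds 0))

/-- Nuclearity of the `C*`-dynamical system `(A,G,α)` (Definition 4.2): a net of
completely positive, finitely supported Herz-Schur multipliers, with `‖F_i(e)‖_cb ≤ 1`,
with finite-rank values, converging to the identity pointwise in norm. -/
def DynNuclear (ι : A →⋆ₙₐ[ℂ] (H →L[ℂ] H)) (α : G → A ≃⋆ₐ[ℂ] A) : Prop :=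
  ∃ (I : Type) (_ : Nonempty I) (_ : SemilatticeSup I) (F : I → G → (A →ₗ[ℂ] A)),
    (∀ i, IsHerzSchurMultiplierCP ι α (F i)) ∧
    (∀ i, (Function.support (F i)).Finite) ∧
    (∀ i, CBBound (fun a => ι a) (fun a => ι a) (F i 1) 1) ∧
    (∀ i (s : G), FiniteDimensional ℂ (LinearMap.range (F i s))) ∧
    (∀ (s : G) (a : A), Tendsto (fun i => ‖F i s a - a‖) atTop (nhds 0))

end Nuc

section Amen

open Filter

variable {A : Type*} [CStarAlgebra A]

/-- Amenability of the action `α` of a discrete group `G` on a unital C*-algebra `A`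
(Definition 4.5): a net of finitely supported functions `T_i : G → Z(A)⁺` with
`Σ_s T_i(s)² = 1` and `‖Σ_s (T_i(s) - α_t(T_i(t⁻¹s)))*(T_i(s) - α_t(T_i(t⁻¹s)))‖ → 0`. -/
def AmenableAction {G : Type*} [Group G] (α : G → A ≃⋆ₐ[ℂ] A) : Prop :=
  ∃ (I : Type) (_ : Nonempty I) (_ : SemilatticeSup I) (T : I → G → A),
    (∀ i, (Function.support (T i)).Finite) ∧
    (∀ i (s : G) (c : A), Commute (T i s) c) ∧
    (∀ i (s : G), ∃ b : A, T i s = star b * b) ∧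
    (∀ i, ∑ᶠ s : G, T i s * T i s = 1) ∧
    (∀ t : G, Tendsto (fun i =>
        ‖∑ᶠ s : G, star (T i s - α t (T i (t⁻¹ * s))) *
          (T i s - α t (T i (t⁻¹ * s)))‖) atTop (nhds 0))

end Amen

universe u v w

/-- Data for a Stinespring-type representation of an operator-valued function on
`X × X`: a Hilbert space `K`, a *-representation `ρ : A → B(K)` and
families of operators `V, W : X → B(H,K)`. -/
structure OpValuedRep (A : Type u) [NonUnitalCStarAlgebra A]
    (H : Type v) [NormedAddCommGroup H] [InnerProductSpace ℂ H] [CompleteSpace H]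
    (X : Type w) where
  /-- the Hilbert space of the representation -/
  K : Type (max u v w)
  [nacg : NormedAddCommGroup K]
  [ips : InnerProductSpace ℂ K]
  [cpl : CompleteSpace K]
  /-- the representation -/
  ρ : A →⋆ₙₐ[ℂ] (K →L[ℂ] K)
  /-- the left family of operators -/
  V : X → (H →L[ℂ] K)
  /-- the right family of operators -/
  W : X → (H →L[ℂ] K)

attribute [instance] OpValuedRep.nacg OpValuedRep.ips OpValuedRep.cpl

end
noncomputable section
open scoped ComplexOrder ENNReal
open Matrix

section P1
variable {H : Type*} [NormedAddCommGroup H] [InnerProductSpace ℂ H] [CompleteSpace H]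
variable {ν : Type*} [Fintype ν]

def QPos (M : Matrix ν ν (H →L[ℂ] H)) : Prop :=
  ∀ w : ν → H, 0 ≤ ∑ i, ∑ j, inner ℂ (w i) (M i j (w j))

lemma inner_self_nonneg_c {E : Type*} [NormedAddCommGroup E] [InnerProductSpace ℂ E] (x : E) :
    0 ≤ inner ℂ x x := by
  rw [inner_self_eq_norm_sq_to_K]
  simp only [Complex.coe_algebraMap, ← Complex.ofReal_pow]
  exact Complex.zero_le_real.2 (by positivity)

lemma exists_sqrt {E : Type*} [NormedAddCommGroup E] [InnerProductSpace ℂ E] [CompleteSpace E]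
    {T : E →L[ℂ] E} (hT : T.IsPositive) : ∃ S : E →L[ℂ] E, T = star S * S := by
  rw [← ContinuousLinearMap.nonneg_iff_isPositive, CStarAlgebra.nonneg_iff_eq_star_mul_self] at hT
  exact hT

lemma matOp_apply (M : Matrix ν ν (H →L[ℂ] H)) (f : PiLp 2 (fun _ : ν => H)) (i : ν) :
    matOp M f i = ∑ j, M i j (f j) := by
  simp [matOp]

lemma inner_matOp (M : Matrix ν ν (H →L[ℂ] H)) (f g : PiLp 2 (fun _ : ν => H)) :
    inner ℂ f (matOp M g) = ∑ i, ∑ j, inner ℂ (f i) (M i j (g j)) := by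
  simp [PiLp.inner_apply, matOp_apply, inner_sum]

lemma matPos_imp_qPos {M : Matrix ν ν (H →L[ℂ] H)} (h : MatPos M) : QPos M := by
  obtain ⟨N, rfl⟩ := h
  intro w
  have : ∑ i, ∑ j, inner ℂ (w i) ((Nᴴ * N) i j (w j))
      = ∑ r, inner ℂ (∑ i, N r i (w i)) (∑ j, N r j (w j)) := by
    simp only [Matrix.mul_apply, Matrix.conjTranspose_apply, _root_.sum_apply,
      inner_sum, sum_inner, mul_apply_eq_comp, ContinuousLinearMap.star_eq_adjoint,
      ContinuousLinearMap.adjoint_inner_right]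
    have e1 : ∀ i, ∑ j, ∑ r, inner ℂ (N r i (w i)) (N r j (w j))
        = ∑ r, ∑ j, inner ℂ (N r i (w i)) (N r j (w j)) := fun i => Finset.sum_comm
    have e2 : ∀ r, ∑ j, ∑ i, inner ℂ (N r i (w i)) (N r j (w j))
        = ∑ i, ∑ j, inner ℂ (N r i (w i)) (N r j (w j)) := fun i => Finset.sum_comm
    rw [Finset.sum_congr rfl fun i _ => e1 i, Finset.sum_comm]
    simp only [e2]
  rw [this]
  refine Finset.sum_nonneg fun r _ => ?_
  exact inner_self_nonneg_c _

lemma qPos_imp_matPos [DecidableEq ν] {M : Matrix ν ν (H →L[ℂ] H)} (h : QPos M) : MatPos M := by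
  have hp : (matOp M).IsPositive := by
    rw [ContinuousLinearMap.isPositive_iff_complex]
    intro f
    have h0 : 0 ≤ inner ℂ f (matOp M f) := by rw [inner_matOp]; exact h _
    have h1 : inner ℂ (matOp M f) f = inner ℂ f (matOp M f) := by
      rw [← inner_conj_symm]
      exact Complex.conj_eq_iff_im.2 (Complex.nonneg_iff.1 h0).2.symm
    rw [h1]
    constructor
    · apply Complex.ext
      · simp
      · simpa using (Complex.nonneg_iff.1 h0).2
    · exact (Complex.nonneg_iff.1 h0).1
  obtain ⟨S, hS⟩ := exists_sqrt hp
  let sg : ν → H →L[ℂ] PiLp 2 (fun _ : ν => H) := fun j =>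
    ((PiLp.continuousLinearEquiv 2 ℂ (fun _ : ν => H)).symm :
      (∀ _ : ν, H) →L[ℂ] PiLp 2 (fun _ : ν => H)) ∘L (ContinuousLinearMap.single ℂ (fun _ : ν => H) j)
  refine ⟨Matrix.of fun i j => (PiLp.proj 2 (fun _ : ν => H) i : _ →L[ℂ] H) ∘L S ∘L sg j, ?_⟩
  ext i j ξ
  apply ext_inner_left ℂ
  intro η
  have h1 : inner ℂ η (M i j ξ) = inner ℂ (sg i η) (matOp M (sg j ξ)) := by
    rw [inner_matOp]
    simp only [sg]
    rw [Finset.sum_eq_single i, Finset.sum_eq_single j]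
    · simp
    · intro b _ hb; simp [hb]
    · simp
    · intro b _ hb; simp [hb]
    · simp
  rw [h1, hS, mul_apply_eq_comp, ContinuousLinearMap.star_eq_adjoint,
      ContinuousLinearMap.adjoint_inner_right, PiLp.inner_apply]
  simp [Matrix.mul_apply, inner_sum, ContinuousLinearMap.star_eq_adjoint,
      ContinuousLinearMap.adjoint_inner_right]

lemma matPos_iff_qPos [DecidableEq ν] {M : Matrix ν ν (H →L[ℂ] H)} : MatPos M ↔ QPos M :=
  ⟨matPos_imp_qPos, qPos_imp_matPos⟩

end P1

section P2
open UniformSpace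

lemma exists_defect {A : Type*} [NonUnitalCStarAlgebra A] (c : A) :
    ∃ D : A → A, ∀ a b, star (D a) * D b
      = ((‖c‖ ^ 2 : ℝ) : ℂ) • (star a * b) - star (c * a) * (c * b) := by
  letI : PartialOrder (Unitization ℂ A) := CStarAlgebra.spectralOrder _
  letI : StarOrderedRing (Unitization ℂ A) := CStarAlgebra.spectralOrderedRing _
  have h1 : (0 : Unitization ℂ A) ≤ algebraMap ℝ _ (‖c‖ ^ 2) - star (c : Unitization ℂ A) * c := by
    rw [sub_nonneg]
    have := (IsSelfAdjoint.star_mul_self (c : Unitization ℂ A)).le_algebraMap_norm_self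
    rwa [CStarRing.norm_star_mul_self, Unitization.norm_inr, ← sq] at this
  obtain ⟨d, hd⟩ := CStarAlgebra.nonneg_iff_eq_star_mul_self.1 h1
  have hD : ∀ a : A, ((d * (a : Unitization ℂ A)).snd : Unitization ℂ A) = d * (a : Unitization ℂ A) := by
    intro a
    ext
    · simp
    · simp
  refine ⟨fun a => (d * (a : Unitization ℂ A)).snd, fun a b => ?_⟩
  apply Unitization.inr_injective (R := ℂ)
  rw [Unitization.inr_mul, Unitization.inr_star, hD, hD, star_mul]
  rw [show star (a : Unitization ℂ A) * star d * (d * (b : Unitization ℂ A))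
    = star (a : Unitization ℂ A) * (star d * d) * b by simp only [mul_assoc], ← hd]
  rw [mul_sub, sub_mul, Algebra.algebraMap_eq_smul_one]
  simp [mul_assoc]
  rw [← Complex.ofReal_pow, Complex.coe_smul]

variable {I : Type*} {A : Type*} [NonUnitalCStarAlgebra A]

def KPos (κ : I → I → A →ₗ[ℂ] ℂ) : Prop :=
  ∀ (S : Finset I) (a : I → A), 0 ≤ ∑ i ∈ S, ∑ j ∈ S, κ i j (star (a i) * a j)

def kform (κ : I → I → A →ₗ[ℂ] ℂ) (f g : I →₀ A) : ℂ :=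
  f.sum fun i a => g.sum fun j b => κ i j (star a * b)

lemma kform_add_left (κ : I → I → A →ₗ[ℂ] ℂ) (f f' g : I →₀ A) :
    kform κ (f + f') g = kform κ f g + kform κ f' g := by
  unfold kform
  rw [Finsupp.sum_add_index']
  · simp [Finsupp.sum]
  · intro i a b; simp [add_mul, Finsupp.sum_add]

lemma kform_add_right (κ : I → I → A →ₗ[ℂ] ℂ) (f g g' : I →₀ A) :
    kform κ f (g + g') = kform κ f g + kform κ f g' := by
  unfold kform
  rw [← Finsupp.sum_add]
  refine Finsupp.sum_congr fun i _ => ?_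
  rw [Finsupp.sum_add_index']
  · simp
  · intro i a b; simp [mul_add]

lemma kform_smul_left (κ : I → I → A →ₗ[ℂ] ℂ) (r : ℂ) (f g : I →₀ A) :
    kform κ (r • f) g = (starRingEnd ℂ) r * kform κ f g := by
  unfold kform
  rw [Finsupp.sum_smul_index']
  · simp [Finsupp.sum, Finset.mul_sum, smul_mul_assoc]
  · simp [Finsupp.sum]

lemma kform_smul_right (κ : I → I → A →ₗ[ℂ] ℂ) (r : ℂ) (f g : I →₀ A) :
    kform κ f (r • g) = r * kform κ f g := by
  unfold kform
  rw [Finsupp.mul_sum]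
  refine Finsupp.sum_congr fun i _ => ?_
  rw [Finsupp.sum_smul_index']
  · simp [Finsupp.sum, Finset.mul_sum, mul_smul_comm]
  · simp

lemma kform_single (κ : I → I → A →ₗ[ℂ] ℂ) (i j : I) (a b : A) :
    kform κ (Finsupp.single i a) (Finsupp.single j b) = κ i j (star a * b) := by
  simp [kform]

lemma kform_self_nonneg {κ : I → I → A →ₗ[ℂ] ℂ} (hκ : KPos κ) (f : I →₀ A) :
    0 ≤ kform κ f f := hκ f.support f

lemma kform_symm {κ : I → I → A →ₗ[ℂ] ℂ} (hκ : KPos κ) (f g : I →₀ A) :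
    (starRingEnd ℂ) (kform κ g f) = kform κ f g := by
  have h0 : ∀ f, (kform κ f f).im = 0 := fun f =>
    (Complex.nonneg_iff.1 (kform_self_nonneg hκ f)).2.symm
  have h1 := h0 (f + g)
  have h2 := h0 (f + Complex.I • g)
  simp only [kform_add_left, kform_add_right, kform_smul_left, kform_smul_right] at h1 h2
  simp [h0] at h1 h2
  apply Complex.ext
  · simp; linarith
  · simp; linarith

set_option linter.unusedVariables false in
def PreG (κ : I → I → A →ₗ[ℂ] ℂ) (hκ : KPos κ) := I →₀ A

variable (κ : I → I → A →ₗ[ℂ] ℂ) (hκ : KPos κ)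

instance : AddCommGroup (PreG κ hκ) := inferInstanceAs (AddCommGroup (I →₀ A))
instance : Module ℂ (PreG κ hκ) := inferInstanceAs (Module ℂ (I →₀ A))

def toG : (I →₀ A) ≃ₗ[ℂ] PreG κ hκ := LinearEquiv.refl ℂ _

abbrev preGCore : PreInnerProductSpace.Core ℂ (PreG κ hκ) where
  inner f g := kform κ ((toG κ hκ).symm f) ((toG κ hκ).symm g)
  conj_inner_symm f g := kform_symm hκ _ _
  re_inner_nonneg f := (Complex.nonneg_iff.1 (kform_self_nonneg hκ _)).1
  add_left f g h := by rw [map_add, kform_add_left]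
  smul_left f g r := by rw [map_smul, kform_smul_left]

instance : SeminormedAddCommGroup (PreG κ hκ) :=
  InnerProductSpace.Core.toSeminormedAddCommGroup (c := preGCore κ hκ)
instance : InnerProductSpace ℂ (PreG κ hκ) :=
  InnerProductSpace.ofCore (preGCore κ hκ)

lemma preG_inner (f g : PreG κ hκ) :
  inner ℂ f g = kform κ ((toG κ hκ).symm f) ((toG κ hκ).symm g) := rfl

def mulG (c : A) : (I →₀ A) →ₗ[ℂ] (I →₀ A) := Finsupp.mapRange.linearMap (LinearMap.mulLeft ℂ c)

lemma kform_mulG (c : A) (f g : I →₀ A) :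
    kform κ (mulG c f) (mulG c g)
      = f.sum fun i a => g.sum fun j b => κ i j (star (c * a) * (c * b)) := by
  simp only [kform, mulG, Finsupp.mapRange.linearMap_apply]
  rw [Finsupp.sum_mapRange_index]
  · refine Finsupp.sum_congr fun i _ => ?_
    rw [Finsupp.sum_mapRange_index]
    · rfl
    · simp
  · simp [Finsupp.sum]

lemma kform_mulG_adj (c : A) (f g : I →₀ A) :
    kform κ (mulG (star c) f) g = kform κ f (mulG c g) := by
  simp only [kform, mulG, Finsupp.mapRange.linearMap_apply]
  rw [Finsupp.sum_mapRange_index]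
  · refine Finsupp.sum_congr fun i _ => ?_
    rw [Finsupp.sum_mapRange_index]
    · simp [mul_assoc]
    · simp
  · simp [Finsupp.sum]

lemma kform_mulG_le (c : A) (f : I →₀ A) (hκ : KPos κ) :
    (kform κ (mulG c f) (mulG c f)).re ≤ ‖c‖ ^ 2 * (kform κ f f).re := by
  obtain ⟨D, hD⟩ := exists_defect c
  have h := hκ f.support (fun i => D (f i))
  have : ∑ i ∈ f.support, ∑ j ∈ f.support, κ i j (star (D (f i)) * D (f j))
      = ((‖c‖ ^ 2 : ℝ) : ℂ) * kform κ f f - kform κ (mulG c f) (mulG c f) := by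
    rw [kform_mulG]
    simp only [hD, map_sub, map_smul, Finset.sum_sub_distrib, kform, Finsupp.sum, Finset.mul_sum,
      smul_eq_mul]
  rw [this] at h
  have h2 := (Complex.nonneg_iff.1 h).1
  rw [Complex.sub_re, Complex.re_ofReal_mul] at h2
  linarith

lemma preG_norm_sq (f : PreG κ hκ) :
    ‖f‖ ^ 2 = (kform κ ((toG κ hκ).symm f) ((toG κ hκ).symm f)).re := by
  rw [← preG_inner, ← inner_self_eq_norm_sq (𝕜 := ℂ)]; rfl

def lmG (c : A) : PreG κ hκ →L[ℂ] PreG κ hκ :=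
  ((toG κ hκ).toLinearMap ∘ₗ mulG c ∘ₗ (toG κ hκ).symm.toLinearMap).mkContinuous ‖c‖ fun f => by
    rw [← sq_le_sq₀ (by positivity) (by positivity), mul_pow, preG_norm_sq, preG_norm_sq]
    exact kform_mulG_le κ c _ hκ

lemma lmG_apply (c : A) (f : PreG κ hκ) :
    lmG κ hκ c f = toG κ hκ (mulG c ((toG κ hκ).symm f)) := rfl

lemma mulG_add (c d : A) (f : I →₀ A) : mulG (c + d) f = mulG c f + mulG d f := by
  ext i; simp [mulG, add_mul]
lemma mulG_smul (c : ℂ) (d : A) (f : I →₀ A) : mulG (c • d) f = c • mulG d f := by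
  ext i; simp [mulG, smul_mul_assoc]
lemma mulG_mul (c d : A) (f : I →₀ A) : mulG (c * d) f = mulG c (mulG d f) := by
  ext i; simp [mulG, mul_assoc]

lemma completion_clm_ext {E : Type*} [SeminormedAddCommGroup E] [InnerProductSpace ℂ E]
    {S T : Completion E →L[ℂ] Completion E} (h : ∀ f : E, S f = T f) : S = T := by
  ext f
  induction f using Completion.induction_on with
  | hp => exact isClosed_eq S.continuous T.continuous
  | ih f => exact h f

lemma lmG_coe (c : A) (f : PreG κ hκ) :
    (lmG κ hκ c).completion (f : Completion (PreG κ hκ))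
      = (toG κ hκ (mulG c ((toG κ hκ).symm f)) : PreG κ hκ) := by
  rw [ContinuousLinearMap.completion_apply_coe]; rfl

lemma lmG_smul (r : ℂ) (c : A) :
    (lmG κ hκ (r • c)).completion = r • (lmG κ hκ c).completion := by
  refine completion_clm_ext fun f => ?_
  rw [_root_.smul_apply, lmG_coe, lmG_coe, mulG_smul, map_smul, Completion.coe_smul]

lemma lmG_add (c d : A) :
    (lmG κ hκ (c + d)).completion = (lmG κ hκ c).completion + (lmG κ hκ d).completion := by
  refine completion_clm_ext fun f => ?_
  rw [_root_.add_apply, lmG_coe, lmG_coe, lmG_coe, mulG_add, map_add, Completion.coe_add]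

lemma lmG_mul (c d : A) :
    (lmG κ hκ (c * d)).completion = (lmG κ hκ c).completion * (lmG κ hκ d).completion := by
  refine completion_clm_ext fun f => ?_
  rw [mul_apply_eq_comp, lmG_coe, lmG_coe, lmG_coe, mulG_mul, LinearEquiv.symm_apply_apply]

lemma lmG_star (c : A) :
    (lmG κ hκ (star c)).completion = star (lmG κ hκ c).completion := by
  refine (ContinuousLinearMap.eq_adjoint_iff _ _).mpr ?_
  intro f g
  induction f, g using Completion.induction_on₂ with
  | hp =>
    refine isClosed_eq ?_ ?_
    · exact Continuous.inner ((ContinuousLinearMap.continuous _).comp continuous_fst) continuous_snd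
    · exact Continuous.inner continuous_fst ((ContinuousLinearMap.continuous _).comp continuous_snd)
  | ih f g =>
    rw [lmG_coe, lmG_coe, Completion.inner_coe, Completion.inner_coe, preG_inner, preG_inner,
      LinearEquiv.symm_apply_apply, LinearEquiv.symm_apply_apply, kform_mulG_adj]

def gnsRep : A →⋆ₙₐ[ℂ] (Completion (PreG κ hκ) →L[ℂ] Completion (PreG κ hκ)) where
  toFun c := (lmG κ hκ c).completion
  map_smul' r c := lmG_smul κ hκ r c
  map_zero' := by
    have := lmG_smul κ hκ 0 0
    rwa [zero_smul, zero_smul] at this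
  map_add' c d := lmG_add κ hκ c d
  map_mul' c d := lmG_mul κ hκ c d
  map_star' c := lmG_star κ hκ c

def gnsVec (i : I) (a : A) : Completion (PreG κ hκ) := (toG κ hκ (Finsupp.single i a) : PreG κ hκ)

lemma gnsVec_inner (i j : I) (a b : A) :
    inner ℂ (gnsVec κ hκ i a) (gnsVec κ hκ j b) = κ i j (star a * b) := by
  simp [gnsVec, preG_inner, kform_single]

lemma gnsRep_vec (c : A) (i : I) (a : A) :
    gnsRep κ hκ c (gnsVec κ hκ i a) = gnsVec κ hκ i (c * a) := by
  change (lmG κ hκ c).completion _ = _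
  rw [gnsVec, lmG_coe]
  simp [mulG, gnsVec]

lemma gnsVec_dense :
    Dense (Submodule.span ℂ {v | ∃ i a, gnsVec κ hκ i a = v} : Set (Completion (PreG κ hκ))) := by
  have h : Set.range ((↑) : PreG κ hκ → Completion (PreG κ hκ)) ⊆
      (Submodule.span ℂ {v | ∃ i a, gnsVec κ hκ i a = v} : Set (Completion (PreG κ hκ))) := by
    rintro _ ⟨f, rfl⟩
    obtain ⟨f, rfl⟩ := (toG κ hκ).surjective f
    induction f using Finsupp.induction_linear with
    | zero => rw [map_zero, Completion.coe_zero]; exact Submodule.zero_mem _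
    | add f g hf hg => rw [map_add, Completion.coe_add]; exact Submodule.add_mem _ hf hg
    | single i a => exact Submodule.subset_span ⟨i, a, rfl⟩
  exact (Completion.denseRange_coe).mono h

end P2

section P3
open Filter Topology UniformSpace

lemma weak_lim {E : Type*} [NormedAddCommGroup E] [InnerProductSpace ℂ E] [CompleteSpace E]
    {α : Type*} (U : Ultrafilter α) (v : α → E) (C : ℝ) (hv : ∀ᶠ e in (U : Filter α), ‖v e‖ ≤ C) :
    ∃ x : E, ‖x‖ ≤ C ∧ ∀ w, Tendsto (fun e => inner ℂ (v e) w) U (𝓝 (inner ℂ x w)) := by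
  have hC : 0 ≤ C := by
    obtain ⟨e, he⟩ := hv.exists
    exact (norm_nonneg _).trans he
  have h1 : ∀ w : E, ∃ z : ℂ, Tendsto (fun e => inner ℂ (v e) w) U (𝓝 z) := by
    intro w
    have hk : IsCompact (Metric.closedBall (0 : ℂ) (C * ‖w‖)) := isCompact_closedBall _ _
    obtain ⟨z, -, hz⟩ := hk.ultrafilter_le_nhds (U.map fun e => inner ℂ (v e) w) (by
      rw [le_principal_iff]
      change ∀ᶠ e in (U : Filter α), inner ℂ (v e) w ∈ _
      filter_upwards [hv] with e he
      rw [mem_closedBall_zero_iff]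
      exact (norm_inner_le_norm _ _).trans (by gcongr))
    exact ⟨z, hz⟩
  choose l hl using h1
  have hbound : ∀ w, ‖l w‖ ≤ C * ‖w‖ := by
    intro w
    refine le_of_tendsto (hl w).norm ?_
    filter_upwards [hv] with e he
    exact (norm_inner_le_norm _ _).trans (by gcongr)
  let L : E →L[ℂ] ℂ := LinearMap.mkContinuous
    { toFun := l
      map_add' := fun a b => by
        refine tendsto_nhds_unique (hl (a + b)) ?_
        simp only [inner_add_right]
        exact (hl a).add (hl b)
      map_smul' := fun c a => by
        refine tendsto_nhds_unique (hl (c • a)) ?_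
        simp only [inner_smul_right]
        exact (hl a).const_mul c } C hbound
  refine ⟨(InnerProductSpace.toDual ℂ E).symm L, ?_, fun w => ?_⟩
  · rw [LinearIsometryEquiv.norm_map]
    exact LinearMap.mkContinuous_norm_le _ hC _
  · rw [InnerProductSpace.toDual_symm_apply]
    exact hl w

lemma exists_approxUnit (A : Type*) [NonUnitalCStarAlgebra A] :
    ∃ l : Filter A, l.NeBot ∧ (∀ᶠ e in l, ‖e‖ ≤ 1) ∧ (∀ᶠ e in l, star e = e) ∧
      (∀ b, Tendsto (fun e => e * b) l (𝓝 b)) ∧ (∀ b, Tendsto (fun e => b * e) l (𝓝 b)) := by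
  letI : PartialOrder A := CStarAlgebra.spectralOrder _
  letI : StarOrderedRing A := CStarAlgebra.spectralOrderedRing _
  have h := CStarAlgebra.increasingApproximateUnit A
  exact ⟨_, h.neBot, h.eventually_norm, h.eventually_star_eq, h.tendsto_mul_right,
    h.tendsto_mul_left⟩

lemma dense_ext {E : Type*} [NormedAddCommGroup E] [InnerProductSpace ℂ E] {S : Set E}
    (hS : Dense (Submodule.span ℂ S : Set E)) {v w : E}
    (h : ∀ s ∈ S, inner ℂ s v = inner ℂ s w) : v = w := by
  refine hS.eq_of_inner_left (𝕜 := ℂ) ?_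
  intro s hs
  induction hs using Submodule.span_induction with
  | mem x hx =>
    rw [← inner_conj_symm, h x hx, inner_conj_symm]
  | zero => simp
  | add x y _ _ hx hy => rw [inner_add_right, inner_add_right, hx, hy]
  | smul c x _ hx => rw [inner_smul_right, inner_smul_right, hx]

variable {I : Type*} {A : Type*} [NonUnitalCStarAlgebra A]

lemma kolm (κ : I → I → A →ₗ[ℂ] ℂ) (hκ : KPos κ) (c : I → ℝ) (hc0 : ∀ i, 0 ≤ c i)
    (hc : ∀ i a, ‖κ i i a‖ ≤ c i * ‖a‖) (hcont : ∀ i j, Continuous (κ i j)) :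
    ∃ v : I → Completion (PreG κ hκ), (∀ i, ‖v i‖ ≤ √(c i)) ∧
      (∀ i j a, inner ℂ (v i) (gnsVec κ hκ j a) = κ i j a) ∧
      ∀ i a, gnsRep κ hκ a (v i) = gnsVec κ hκ i a := by
  obtain ⟨l, hl, h1, h2, h3, -⟩ := exists_approxUnit A
  let U : Ultrafilter A := Ultrafilter.of l
  have hU : (U : Filter A) ≤ l := Ultrafilter.of_le l
  have hv : ∀ i, ∃ x : Completion (PreG κ hκ), ‖x‖ ≤ √(c i) ∧
      ∀ w, Tendsto (fun e => inner ℂ (gnsVec κ hκ i e) w) U (𝓝 (inner ℂ x w)) := by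
    intro i
    apply weak_lim
    filter_upwards [hU h1] with e he
    rw [← sq_le_sq₀ (norm_nonneg _) (Real.sqrt_nonneg _), Real.sq_sqrt (hc0 i)]
    have : ‖gnsVec κ hκ i e‖ ^ 2 = ‖κ i i (star e * e)‖ := by
      rw [← gnsVec_inner κ hκ, inner_self_eq_norm_sq_to_K]; simp
    rw [this]
    refine (hc _ _).trans ?_
    rw [CStarRing.norm_star_mul_self]
    have he' : ‖e‖ ≤ 1 := he
    nlinarith [norm_nonneg e, hc0 i, mul_le_one₀ he' (norm_nonneg e) he']
  choose v hv1 hv2 using hv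
  have hv3 : ∀ i j a, inner ℂ (v i) (gnsVec κ hκ j a) = κ i j a := by
    intro i j a
    refine tendsto_nhds_unique (hv2 i (gnsVec κ hκ j a)) ?_
    have h4 : Tendsto (fun e => κ i j (e * a)) U (𝓝 (κ i j a)) :=
      ((hcont i j).tendsto a).comp ((h3 a).mono_left hU)
    refine h4.congr' ?_
    filter_upwards [hU h2] with e he
    have he' : star e = e := he
    rw [gnsVec_inner, he']
  refine ⟨v, hv1, hv3, fun i a => ?_⟩
  apply dense_ext (gnsVec_dense κ hκ)
  rintro _ ⟨j, b, rfl⟩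
  rw [← ContinuousLinearMap.adjoint_inner_left, ← ContinuousLinearMap.star_eq_adjoint,
    ← map_star, gnsRep_vec, ← inner_conj_symm, hv3,
    ← inner_conj_symm (gnsVec κ hκ j b), gnsVec_inner]

variable {H : Type*} [NormedAddCommGroup H] [InnerProductSpace ℂ H] [CompleteSpace H]
variable {X : Type*}

def kapOf (φ : X → X → (A →ₗ[ℂ] (H →L[ℂ] H))) (p q : X × H) : A →ₗ[ℂ] ℂ where
  toFun a := inner ℂ p.2 (φ p.1 q.1 a q.2)
  map_add' a b := by simp [inner_add_right]
  map_smul' c a := by simp [inner_smul_right]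

lemma matPos_rankOne {n : ℕ} (a : Fin n → A) :
    MatPos (Matrix.of fun p q => star (a p) * a q) := by
  refine ⟨Matrix.of fun r q => if r.val = 0 then a q else 0, ?_⟩
  ext p q
  rw [Matrix.mul_apply, Finset.sum_eq_single ⟨0, p.pos⟩]
  · simp
  · intro b _ hb
    have : b.val ≠ 0 := fun h => hb (Fin.ext h)
    simp [this]
  · simp

lemma kapOf_pos {φ : X → X → (A →ₗ[ℂ] (H →L[ℂ] H))} (h : PositiveType φ) : KPos (kapOf φ) := by
  intro S a
  let e := S.equivFin
  let z : Fin S.card → X × H := fun p => (e.symm p : X × H)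
  have h1 := matPos_imp_qPos (h S.card (fun p => (z p).1) _ (matPos_rankOne fun p => a (z p)))
    (fun p => (z p).2)
  have h2 : ∀ F : X × H → ℂ, ∑ i ∈ S, F i = ∑ p, F (z p) := by
    intro F
    rw [← Finset.sum_coe_sort, ← e.symm.sum_comp]
  rw [h2]
  simp only [h2]
  exact h1

theorem stine {φ : X → X → (A →ₗ[ℂ] (H →L[ℂ] H))} (h : PositiveType φ)
    (hb : ∀ x y, ∃ C, ∀ a, ‖φ x y a‖ ≤ C * ‖a‖) (c : X → ℝ) (hc0 : ∀ x, 0 ≤ c x)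
    (hc : ∀ x a, ‖φ x x a‖ ≤ c x * ‖a‖) :
    ∃ R : OpValuedRep A H X, NondegenerateRep R.ρ ∧ (∀ x, ‖R.V x‖ ≤ √(c x)) ∧ R.W = R.V ∧
      ∀ (x y : X) (a : A),
          φ x y a = (ContinuousLinearMap.adjoint (R.V x)) ∘L (R.ρ a) ∘L (R.V y) := by
  have hκ := kapOf_pos h
  obtain ⟨v, hv1, hv2, hv3⟩ := kolm (kapOf φ) hκ (fun p => c p.1 * ‖p.2‖ ^ 2)
    (fun p => mul_nonneg (hc0 _) (by positivity))
    (fun p a => by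
      change ‖inner ℂ p.2 (φ p.1 p.1 a p.2)‖ ≤ _
      refine (norm_inner_le_norm _ _).trans ?_
      have := ((φ p.1 p.1 a).le_opNorm p.2).trans
        (mul_le_mul_of_nonneg_right (hc p.1 a) (norm_nonneg _))
      nlinarith [norm_nonneg p.2])
    (fun p q => by
      obtain ⟨C, hC⟩ := hb p.1 q.1
      have : Continuous (φ p.1 q.1) := (LinearMap.mkContinuous _ C hC).continuous
      change Continuous fun a => inner ℂ p.2 (φ p.1 q.1 a q.2)
      fun_prop)
  let K := Completion (PreG (kapOf φ) hκ)
  have hd := gnsVec_dense (kapOf φ) hκ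
  let V : X → (H →L[ℂ] K) := fun x => LinearMap.mkContinuous
    { toFun := fun ξ => v (x, ξ)
      map_add' := fun ξ η => by
        apply dense_ext hd
        rintro _ ⟨j, b, rfl⟩
        rw [inner_add_right]
        rw [← inner_conj_symm, hv2, ← inner_conj_symm _ (v (x, ξ)), hv2,
          ← inner_conj_symm _ (v (x, η)), hv2, ← map_add]
        congr 1
        simp [kapOf, inner_add_left]
      map_smul' := fun r ξ => by
        apply dense_ext hd
        rintro _ ⟨j, b, rfl⟩
        rw [RingHom.id_apply, inner_smul_right]
        rw [← inner_conj_symm, hv2, ← inner_conj_symm _ (v (x, ξ)), hv2]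
        have e1 : kapOf φ (x, r • ξ) j b = (starRingEnd ℂ) r * kapOf φ (x, ξ) j b := by
          exact inner_smul_left _ _ _
        rw [e1, map_mul, Complex.conj_conj] } (√(c x)) (fun ξ => by
      refine (hv1 (x, ξ)).trans ?_
      rw [Real.sqrt_mul (hc0 _), Real.sqrt_sq (norm_nonneg _)])
  refine ⟨{ K := K, ρ := gnsRep (kapOf φ) hκ, V := V, W := V }, ?_, ?_, rfl, ?_⟩
  · refine hd.mono ?_
    apply Submodule.span_mono
    rintro _ ⟨i, a, rfl⟩
    exact ⟨a, v i, hv3 i a⟩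
  · intro x
    refine ContinuousLinearMap.opNorm_le_bound _ (Real.sqrt_nonneg _) fun ξ => ?_
    refine (hv1 (x, ξ)).trans ?_
    rw [Real.sqrt_mul (hc0 _), Real.sqrt_sq (norm_nonneg _)]
  · intro x y a
    ext ξ
    apply ext_inner_left ℂ
    intro η
    simp only [ContinuousLinearMap.comp_apply]
    rw [ContinuousLinearMap.adjoint_inner_right]
    change _ = inner ℂ (v (x, η)) (gnsRep (kapOf φ) hκ a (v (y, ξ)))
    rw [hv3, hv2]
    rfl

end P3

section P4
open Filter Topology UniformSpace

theorem sa_dichotomy {M : Type*} [NonUnitalCStarAlgebra M] (b : M) (hb : star b = b) :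
    (∃ d, b = star d * d) ∨ ∃ m n : M, n * b * n = -(star m * m) ∧ star n = n ∧ m ≠ 0 := by
  letI : PartialOrder M := CStarAlgebra.spectralOrder _
  letI : StarOrderedRing M := CStarAlgebra.spectralOrderedRing _
  have hsa : IsSelfAdjoint b := hb
  by_cases hn : b⁻ = 0
  · left
    exact CStarAlgebra.nonneg_iff_eq_star_mul_self.1
      ((CFC.negPart_eq_zero_iff b hsa).1 hn)
  · right
    have hnn := CFC.negPart_nonneg b
    obtain ⟨c, hc⟩ := CStarAlgebra.nonneg_iff_eq_star_mul_self.1 hnn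
    have hs : star (b⁻) = b⁻ := hnn.isSelfAdjoint
    refine ⟨c * b⁻, b⁻, ?_, hs, ?_⟩
    · have h1 : b⁻ * b * b⁻ = b⁻ * (b⁺ - b⁻) * b⁻ := by rw [CFC.posPart_sub_negPart b hsa]
      rw [h1, mul_sub, CFC.negPart_mul_posPart, zero_sub, star_mul, hs]
      have : b⁻ * star c * (c * b⁻) = b⁻ * (star c * c) * b⁻ := by simp only [mul_assoc]
      rw [this, ← hc, neg_mul]
    · intro h
      have h2 : b⁻ * b⁻ = 0 := by
        calc b⁻ * b⁻ = (star c * c) * b⁻ := by rw [← hc]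
          _ = 0 := by rw [mul_assoc, h, mul_zero]
      apply hn
      rw [← CStarRing.star_mul_self_eq_zero_iff, hs, h2]

variable {A : Type*} [NonUnitalCStarAlgebra A]
variable {H : Type*} [NormedAddCommGroup H] [InnerProductSpace ℂ H] [CompleteSpace H]
variable {K : Type*} [NormedAddCommGroup K] [InnerProductSpace ℂ K] [CompleteSpace K]
variable {ν : Type*} [Fintype ν]

/-- Quadratic form of `Pᴴ * B * P`. -/
theorem quad_conj (P B : Matrix ν ν (H →L[ℂ] H)) (w : ν → H) :
    ∑ i, ∑ j, inner ℂ (w i) ((Pᴴ * B * P) i j (w j))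
      = ∑ k, ∑ l, inner ℂ (∑ i, P k i (w i)) (B k l (∑ j, P l j (w j))) := by
  have h : ∀ i j, inner ℂ (w i) ((Pᴴ * B * P) i j (w j))
      = ∑ k, ∑ l, inner ℂ (P k i (w i)) (B k l (P l j (w j))) := by
    intro i j
    rw [Matrix.mul_apply, _root_.sum_apply, inner_sum, Finset.sum_comm]
    refine Finset.sum_congr rfl fun l _ => ?_
    rw [Matrix.mul_apply, Finset.sum_mul, _root_.sum_apply, inner_sum]
    refine Finset.sum_congr rfl fun k _ => ?_
    rw [Matrix.conjTranspose_apply, mul_apply_eq_comp, mul_apply_eq_comp,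
      ContinuousLinearMap.star_eq_adjoint, ContinuousLinearMap.adjoint_inner_right]
  simp_rw [h, map_sum, sum_inner, inner_sum]
  calc _ = ∑ i, ∑ k, ∑ j, ∑ l, inner ℂ (P k i (w i)) (B k l (P l j (w j))) := by
        exact Finset.sum_congr rfl fun i _ => Finset.sum_comm
    _ = ∑ k, ∑ i, ∑ j, ∑ l, inner ℂ (P k i (w i)) (B k l (P l j (w j))) := Finset.sum_comm
    _ = ∑ k, ∑ i, ∑ l, ∑ j, inner ℂ (P k i (w i)) (B k l (P l j (w j))) :=
        Finset.sum_congr rfl fun k _ => Finset.sum_congr rfl fun i _ => Finset.sum_comm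
    _ = _ := Finset.sum_congr rfl fun k _ => Finset.sum_comm

theorem quad_gram (N : Matrix ν ν (H →L[ℂ] H)) (w : ν → H) :
    ∑ i, ∑ j, inner ℂ (w i) ((Nᴴ * N) i j (w j))
      = ∑ k, inner ℂ (∑ i, N k i (w i)) (∑ j, N k j (w j)) := by
  classical
  have := quad_conj N (1 : Matrix ν ν (H →L[ℂ] H)) w
  rw [mul_one] at this
  rw [this]
  refine Finset.sum_congr rfl fun k _ => ?_
  rw [Finset.sum_eq_single k]
  · simp
  · intro l _ hl
    simp [Matrix.one_apply_ne hl.symm]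
  · simp

theorem qPos_gram (N : Matrix ν ν (H →L[ℂ] H)) : QPos (Nᴴ * N) := by
  intro w
  rw [quad_gram]
  exact Finset.sum_nonneg fun k _ => inner_self_nonneg_c _

theorem map_conjT (ι : A →⋆ₙₐ[ℂ] (H →L[ℂ] H)) (N : Matrix ν ν A) :
    (Nᴴ).map ι = (N.map ι)ᴴ := by
  ext1 i j
  simp [Matrix.conjTranspose_apply, map_star]

theorem map_mul' (ι : A →⋆ₙₐ[ℂ] (H →L[ℂ] H)) (N P : Matrix ν ν A) :
    (N * P).map ι = N.map ι * P.map ι := by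
  ext1 i j
  simp [Matrix.mul_apply, map_sum, map_mul]

theorem reflect_pos (ι : A →⋆ₙₐ[ℂ] (H →L[ℂ] H)) (hι : Function.Injective ι)
    (B : Matrix ν ν A) (hB : Bᴴ = B) (h : QPos (B.map ι)) : MatPos B := by
  letI : PartialOrder A := CStarAlgebra.spectralOrder _
  letI : StarOrderedRing A := CStarAlgebra.spectralOrderedRing _
  rcases sa_dichotomy (M := CStarMatrix ν ν A) (CStarMatrix.ofMatrix B) hB with ⟨d, hd⟩ | ⟨m, n, h1, h2, h3⟩
  · exact ⟨CStarMatrix.ofMatrix.symm d, hd⟩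
  · exfalso
    apply h3
    set m' : Matrix ν ν A := CStarMatrix.ofMatrix.symm m
    set n' : Matrix ν ν A := CStarMatrix.ofMatrix.symm n
    have h1' : n' * B * n' = -(m'ᴴ * m') := h1
    have h2' : n'ᴴ = n' := h2
    have e : (n'.map ι)ᴴ * (B.map ι) * n'.map ι = -((m'.map ι)ᴴ * m'.map ι) := by
      rw [← map_conjT, ← map_conjT, h2', ← map_mul', ← map_mul', ← map_mul', h1']
      ext1 i j
      rw [Matrix.map_apply, Matrix.neg_apply, map_neg, Matrix.neg_apply, Matrix.map_apply]
    have key : ∀ w : ν → H, ∀ k, ∑ j, ι (m' k j) (w j) = 0 := by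
      intro w
      have a1 := h (fun k => ∑ i, (n'.map ι) k i (w i))
      rw [← quad_conj, e] at a1
      have a2 := quad_gram (m'.map ι) w
      simp only [Matrix.neg_apply, _root_.neg_apply, inner_neg_right, Finset.sum_neg_distrib] at a1
      rw [a2] at a1
      have a3 : ∀ k ∈ Finset.univ, 0 ≤ inner ℂ (∑ i, (m'.map ι) k i (w i)) (∑ j, (m'.map ι) k j (w j)) :=
        fun k _ => inner_self_nonneg_c _
      have a4 := le_antisymm (neg_nonneg.1 a1) (Finset.sum_nonneg a3)
      intro k
      have := (Finset.sum_eq_zero_iff_of_nonneg a3).1 a4 k (Finset.mem_univ _)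
      exact inner_self_eq_zero.1 this
    classical
    have : m' = 0 := by
      ext1 k j
      apply hι
      rw [Matrix.zero_apply, map_zero]
      ext1 v
      have := key (Pi.single j v) k
      rw [Finset.sum_eq_single j] at this
      · simpa using this
      · intro l _ hl
        simp [hl]
      · simp
    exact this

theorem transfer_pos (ι : A →⋆ₙₐ[ℂ] (H →L[ℂ] H)) (hι : Function.Injective ι)
    (ρ : A →⋆ₙₐ[ℂ] (K →L[ℂ] K))
    (B : Matrix ν ν A) (hB : Bᴴ = B) (h : QPos (B.map ι)) : QPos (B.map ρ) := by
  obtain ⟨N, hN⟩ := reflect_pos ι hι B hB h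
  rw [hN, map_mul', map_conjT]
  exact qPos_gram _

theorem quad_re (σ : A →⋆ₙₐ[ℂ] (H →L[ℂ] H)) (B : Matrix ν ν A) (w : ν → H) :
      ∑ i, ∑ j, inner ℂ (w i) (((B + Bᴴ).map σ) i j (w j))
        = ((2 * (∑ i, ∑ j, inner ℂ (w i) (σ (B i j) (w j))).re : ℝ) : ℂ) := by
  have h1 : ∑ i, ∑ j, inner ℂ (w i) (((B + Bᴴ).map σ) i j (w j))
      = (∑ i, ∑ j, inner ℂ (w i) (σ (B i j) (w j)))
        + (∑ i, ∑ j, inner ℂ (σ (B j i) (w i)) (w j)) := by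
    rw [← Finset.sum_add_distrib]
    refine Finset.sum_congr rfl fun i _ => ?_
    rw [← Finset.sum_add_distrib]
    refine Finset.sum_congr rfl fun j _ => ?_
    rw [Matrix.map_apply, Matrix.add_apply, map_add, _root_.add_apply, inner_add_right,
      Matrix.conjTranspose_apply, map_star, ContinuousLinearMap.star_eq_adjoint,
      ContinuousLinearMap.adjoint_inner_right]
  have h2 : (∑ i, ∑ j, inner ℂ (σ (B j i) (w i)) (w j))
      = (starRingEnd ℂ) (∑ i, ∑ j, inner ℂ (w i) (σ (B i j) (w j))) := by
    rw [Finset.sum_comm, map_sum]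
    refine Finset.sum_congr rfl fun i _ => ?_
    rw [map_sum]
    refine Finset.sum_congr rfl fun j _ => ?_
    rw [inner_conj_symm]
  rw [h1, h2, Complex.add_conj]

/-- Real part version. -/
theorem transfer_re (ι : A →⋆ₙₐ[ℂ] (H →L[ℂ] H)) (hι : Function.Injective ι)
    (ρ : A →⋆ₙₐ[ℂ] (K →L[ℂ] K)) (B : Matrix ν ν A)
    (h : ∀ w : ν → H, 0 ≤ (∑ i, ∑ j, inner ℂ (w i) (ι (B i j) (w j))).re)
    (w : ν → K) : 0 ≤ (∑ i, ∑ j, inner ℂ (w i) (ρ (B i j) (w j))).re := by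
  have h1 : QPos ((B + Bᴴ).map ρ) := by
    apply transfer_pos ι hι ρ
    · rw [Matrix.conjTranspose_add, Matrix.conjTranspose_conjTranspose, add_comm]
    · intro w
      rw [quad_re]
      exact Complex.zero_le_real.2 (by have := h w; linarith)
  have h2 := h1 w
  rw [quad_re] at h2
  have := Complex.zero_le_real.1 h2
  linarith

/-- an approximate unit converges strongly to 1 in a non-degenerate representation -/
theorem approx_strong (ρ : A →⋆ₙₐ[ℂ] (K →L[ℂ] K)) (hρ : NondegenerateRep ρ) (l : Filter A)
    (h1 : ∀ᶠ e in l, ‖e‖ ≤ 1) (h2 : ∀ b : A, Tendsto (fun e => e * b) l (𝓝 b)) (z : K) :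
    Tendsto (fun e => ρ e z) l (𝓝 z) := by
  have hcont : ∀ v : K, ∀ a : A, ‖ρ a v‖ ≤ ‖a‖ * ‖v‖ := fun v a =>
    ((ρ a).le_opNorm v).trans (mul_le_mul_of_nonneg_right
      (NonUnitalStarAlgHom.norm_apply_le ρ a) (norm_nonneg v))
  have hs : ∀ y ∈ Submodule.span ℂ {ξ : K | ∃ (a : A) (v : K), ρ a v = ξ},
      Tendsto (fun e => ρ e y) l (𝓝 y) := by
    intro y hy
    induction hy using Submodule.span_induction with
    | mem y hy =>
      obtain ⟨a, v, rfl⟩ := hy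
      rw [tendsto_iff_norm_sub_tendsto_zero]
      have h3 : Tendsto (fun e => ‖e * a - a‖ * ‖v‖) l (𝓝 0) := by
        have := (tendsto_iff_norm_sub_tendsto_zero.1 (h2 a)).mul_const ‖v‖
        simpa using this
      refine squeeze_zero (fun _ => norm_nonneg _) (fun e => ?_) h3
      have : ρ e (ρ a v) - ρ a v = ρ (e * a - a) v := by
        rw [map_sub, map_mul]; rfl
      rw [this]
      exact hcont _ _
    | zero => simpa using tendsto_const_nhds
    | add y z _ _ hy hz => simpa only [map_add] using hy.add hz
    | smul c y _ hy => simpa only [map_smul] using hy.const_smul c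
  rw [Metric.tendsto_nhds]
  intro ε hε
  obtain ⟨y, hy, hyz⟩ := Metric.dense_iff.1 hρ z (ε / 3) (by positivity)
  rw [Metric.mem_ball, dist_eq_norm] at hy
  filter_upwards [h1, Metric.tendsto_nhds.1 (hs y hyz) (ε / 3) (by positivity)] with e he1 he2
  rw [dist_eq_norm] at he2 ⊢
  have e1 : ρ e z - z = (ρ e y - y) + (y - z) - ρ e (y - z) := by
    rw [map_sub]; abel
  have e2 : ‖ρ e (y - z)‖ ≤ ‖y - z‖ := by
    refine (hcont _ _).trans ?_
    nlinarith [norm_nonneg (y - z)]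
  rw [e1]
  calc _ ≤ ‖(ρ e y - y) + (y - z)‖ + ‖ρ e (y - z)‖ := norm_sub_le _ _
    _ ≤ ‖ρ e y - y‖ + ‖y - z‖ + ‖ρ e (y - z)‖ := by gcongr; exact norm_add_le _ _
    _ < ε := by linarith

/-- linear extension of `ι a + λ ↦ ρ a + λ` -/
theorem exists_linR (ι : A →⋆ₙₐ[ℂ] (H →L[ℂ] H)) (hι : Function.Injective ι)
    (ρ : A →⋆ₙₐ[ℂ] (K →L[ℂ] K)) (hρ : NondegenerateRep ρ) :
    ∃ R : (H →L[ℂ] H) →ₗ[ℂ] (K →L[ℂ] K), ∀ (a : A) (c : ℂ),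
      R (ι a + c • 1) = ρ a + c • 1 := by
  let F : (A × ℂ) →ₗ[ℂ] (H →L[ℂ] H) :=
    { toFun := fun p => ι p.1 + p.2 • 1
      map_add' := fun p q => by simp only [Prod.fst_add, Prod.snd_add, map_add, add_smul]; abel
      map_smul' := fun c p => by
        simp only [Prod.smul_fst, Prod.smul_snd, map_smul, smul_add, smul_smul, smul_eq_mul,
          RingHom.id_apply] }
  let F' : (A × ℂ) →ₗ[ℂ] (K →L[ℂ] K) :=
    { toFun := fun p => ρ p.1 + p.2 • 1
      map_add' := fun p q => by simp only [Prod.fst_add, Prod.snd_add, map_add, add_smul]; abel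
      map_smul' := fun c p => by
        simp only [Prod.smul_fst, Prod.smul_snd, map_smul, smul_add, smul_smul, smul_eq_mul,
          RingHom.id_apply] }
  have hker : LinearMap.ker F ≤ LinearMap.ker F' := by
    rintro ⟨a, c⟩ h
    rw [LinearMap.mem_ker] at h ⊢
    change ι a + c • 1 = 0 at h
    change ρ a + c • 1 = 0
    have hab : ∀ b : A, a * b + c • b = 0 := by
      intro b
      apply hι
      rw [map_add, map_mul, map_smul, map_zero]
      have := congrArg (fun T => T * ι b) h
      simpa [add_mul] using this
    ext1 z
    refine dense_ext (E := K) (S := {ξ : K | ∃ (a : A) (v : K), ρ a v = ξ}) hρ ?_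
    rintro _ ⟨b, v, rfl⟩
    have hba : star b * a + c • star b = 0 := by
      apply hι
      rw [map_add, map_mul, map_smul, map_zero]
      have := congrArg (fun T => ι (star b) * T) h
      simpa [mul_add] using this
    have h5 : inner ℂ (ρ b v) ((ρ a + c • 1) z) = inner ℂ v (ρ (star b * a + c • star b) z) := by
      have e1 : ρ (star b * a + c • star b) z = ContinuousLinearMap.adjoint (ρ b) ((ρ a + c • 1) z) := by
        rw [map_add, map_mul, map_smul, map_star, ContinuousLinearMap.star_eq_adjoint]
        simp
      rw [e1, ContinuousLinearMap.adjoint_inner_right]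
    rw [h5, hba]
    simp
  obtain ⟨R0, hR0⟩ : ∃ R0 : LinearMap.range F →ₗ[ℂ] (K →L[ℂ] K), ∀ p, R0 (F.rangeRestrict p) = F' p := by
    refine ⟨((LinearMap.ker F).liftQ F' hker) ∘ₗ F.quotKerEquivRange.symm.toLinearMap, fun p => ?_⟩
    have : F.rangeRestrict p = F.quotKerEquivRange (Submodule.Quotient.mk p) := by
      ext1; simp
    rw [this]
    simp
  obtain ⟨R, hR⟩ := R0.exists_extend
  refine ⟨R, fun a c => ?_⟩
  have := hR0 (a, c)
  rw [← hR] at this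
  exact this
end P4

section P5
open Filter Topology UniformSpace

theorem riesz_abs {E W : Type*} [AddCommGroup E] [Module ℂ E] (s : E →ₗ[ℂ] ℂ)
    (q : W → E →ₗ[ℂ] ℂ) (D : Submodule ℂ E)
    (h1 : ∀ M ∈ D, (∀ w, 0 ≤ (q w M).re) → 0 ≤ (s M).re)
    (h2 : ∀ M, ∃ d ∈ D, ∀ w, 0 ≤ (q w (d + M)).re) :
    ∃ G : E →ₗ[ℂ] ℂ, (∀ M ∈ D, G M = s M) ∧ ∀ M, (∀ w, 0 ≤ q w M) → 0 ≤ G M := by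
  let P : PointedCone ℝ E :=
    { carrier := {M | ∀ w, 0 ≤ (q w M).re}
      add_mem' := fun {a b} ha hb w => by
        rw [map_add, Complex.add_re]; exact add_nonneg (ha w) (hb w)
      zero_mem' := fun w => by simp
      smul_mem' := fun c x hx w => by
        have : c • x = ((c : ℝ) : ℂ) • x := rfl
        rw [this, map_smul, smul_eq_mul, Complex.re_ofReal_mul]
        exact mul_nonneg c.2 (hx w) }
  let f : E →ₗ.[ℝ] ℝ :=
    { domain := D.restrictScalars ℝ
      toFun := Complex.reLm ∘ₗ (s.restrictScalars ℝ) ∘ₗ (D.restrictScalars ℝ).subtype }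
  obtain ⟨g, hg1, hg2⟩ := riesz_extension P f (fun x hx => h1 x.1 x.2 hx) (fun M => by
    obtain ⟨d, hd, hdM⟩ := h2 M
    exact ⟨⟨d, hd⟩, hdM⟩)
  have hg1' : ∀ M ∈ D, g M = (s M).re := fun M hM => hg1 ⟨M, hM⟩
  let G : E →ₗ[ℂ] ℂ :=
    { toFun := fun M => (g M : ℂ) - Complex.I * g (Complex.I • M)
      map_add' := fun M N => by
        simp only [map_add, smul_add]; push_cast; ring
      map_smul' := fun c M => by
        have hr : ∀ (r : ℝ) N, g ((r : ℂ) • N) = r * g N := fun r N => g.map_smul r N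
        have e1 : c • M = (c.re : ℂ) • M + (c.im : ℂ) • (Complex.I • M) := by
          rw [smul_smul, ← add_smul, Complex.re_add_im]
        have e2 : Complex.I • c • M = (c.re : ℂ) • (Complex.I • M) - (c.im : ℂ) • M := by
          rw [smul_smul, smul_smul, ← sub_smul]
          congr 1
          apply Complex.ext <;> simp
        rw [e2, e1]
        simp only [map_add, map_sub, hr, RingHom.id_apply, smul_eq_mul]
        push_cast
        apply Complex.ext <;> simp
        ring }
  have hG : ∀ M, G M = (g M : ℂ) - Complex.I * g (Complex.I • M) := fun _ => rfl
  refine ⟨G, fun M hM => ?_, fun M hM => ?_⟩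
  · rw [hG, hg1' M hM, hg1' _ (D.smul_mem _ hM), map_smul]
    apply Complex.ext <;> simp
  · have a1 : 0 ≤ g M := hg2 M fun w => (Complex.le_def.1 (hM w)).1
    have im0 : ∀ w, (q w M).im = 0 := fun w => (Complex.le_def.1 (hM w)).2.symm
    have a2 : 0 ≤ g (Complex.I • M) := hg2 _ fun w => by
      rw [map_smul]; simp [im0 w]
    have a3 : 0 ≤ g (-(Complex.I • M)) := hg2 _ fun w => by
      rw [map_neg, map_smul]; simp [im0 w]
    rw [map_neg] at a3
    have a4 : g (Complex.I • M) = 0 := by linarith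
    rw [hG, a4]
    simpa using a1

variable {A : Type*} [NonUnitalCStarAlgebra A]
variable {H : Type*} [NormedAddCommGroup H] [InnerProductSpace ℂ H] [CompleteSpace H]
variable {K : Type*} [NormedAddCommGroup K] [InnerProductSpace ℂ K] [CompleteSpace K]

/-- matrix-element functional -/
def mel (u v : H) : (H →L[ℂ] H) →ₗ[ℂ] ℂ :=
  { toFun := fun T => inner ℂ u (T v)
    map_add' := fun S T => by rw [_root_.add_apply, inner_add_right]
    map_smul' := fun c T => by rw [_root_.smul_apply, inner_smul_right]; rfl }

theorem mel_apply (u v : H) (T : H →L[ℂ] H) : mel u v T = inner ℂ u (T v) := rfl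

abbrev EE (H K : Type*) [NormedAddCommGroup H] [InnerProductSpace ℂ H] := (K × K) →₀ (H →L[ℂ] H)

/-- the quadratic functionals -/
def qw (w : K → H) : EE H K →ₗ[ℂ] ℂ := Finsupp.lsum ℂ fun p => mel (w p.1) (w p.2)

def sR (R : (H →L[ℂ] H) →ₗ[ℂ] (K →L[ℂ] K)) : EE H K →ₗ[ℂ] ℂ :=
  Finsupp.lsum ℂ fun p => mel p.1 p.2 ∘ₗ R

theorem qw_single (w : K → H) (p : K × K) (T : H →L[ℂ] H) :
    qw w (Finsupp.single p T) = inner ℂ (w p.1) (T (w p.2)) := by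
  simp [qw, mel_apply]

theorem sR_single (R : (H →L[ℂ] H) →ₗ[ℂ] (K →L[ℂ] K)) (p : K × K) (T : H →L[ℂ] H) :
    sR R (Finsupp.single p T) = inner ℂ p.1 (R T p.2) := by
  simp [sR, mel_apply]

theorem lsum_finset (m : K × K → (H →L[ℂ] H) →ₗ[ℂ] ℂ) (M : EE H K) (S : Finset K)
    (hS : M.support ⊆ S ×ˢ S) :
    Finsupp.lsum ℂ m M = ∑ u : S, ∑ v : S, m (u, v) (M (u, v)) := by
  rw [Finsupp.lsum_apply, Finsupp.sum_of_support_subset M hS _ (by simp)]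
  rw [Finset.sum_product, Finset.sum_coe_sort S (fun u => ∑ v : S, m (u, v) (M (u, v)))]
  refine Finset.sum_congr rfl fun u _ => ?_
  rw [Finset.sum_coe_sort S (fun v => m (u, v) (M (u, v)))]

def DD (H K : Type*) [NormedAddCommGroup H] [InnerProductSpace ℂ H] [CompleteSpace H] 
   (ι : A →⋆ₙₐ[ℂ] (H →L[ℂ] H)) : Submodule ℂ (EE H K) :=
  { carrier := {M | ∀ p, ∃ (a : A) (c : ℂ), M p = ι a + c • 1}
    add_mem' := fun {M N} hM hN p => by
      obtain ⟨a, c, h⟩ := hM p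
      obtain ⟨a', c', h'⟩ := hN p
      exact ⟨a + a', c + c', by rw [Finsupp.add_apply, h, h', map_add, add_smul]; abel⟩
    zero_mem' := fun p => ⟨0, 0, by simp⟩
    smul_mem' := fun d M hM p => by
      obtain ⟨a, c, h⟩ := hM p
      exact ⟨d • a, d * c, by rw [Finsupp.smul_apply, h, map_smul, smul_add, smul_smul]⟩ }

theorem cofinal (ι : A →⋆ₙₐ[ℂ] (H →L[ℂ] H)) (M : EE H K) :
    ∃ d ∈ DD H K ι, ∀ w : K → H, 0 ≤ (qw w (d + M)).re := by
  induction M using Finsupp.induction_linear with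
  | zero => exact ⟨0, Submodule.zero_mem _, fun w => by simp⟩
  | add M N hM hN =>
    obtain ⟨d, hd, h⟩ := hM
    obtain ⟨d', hd', h'⟩ := hN
    refine ⟨d + d', Submodule.add_mem _ hd hd', fun w => ?_⟩
    have : d + d' + (M + N) = (d + M) + (d' + N) := by abel
    rw [this, map_add, Complex.add_re]
    exact add_nonneg (h w) (h' w)
  | single p T =>
    have hmem : ∀ u : K × K, Finsupp.single u ((‖T‖ : ℂ) • (1 : H →L[ℂ] H)) ∈ DD H K ι := by
      intro u p
      by_cases h : u = p
      · subst h; exact ⟨0, ‖T‖, by simp⟩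
      · exact ⟨0, 0, by simp [Finsupp.single_apply, h]⟩
    refine ⟨_, Submodule.add_mem _ (hmem (p.1, p.1)) (hmem (p.2, p.2)), fun w => ?_⟩
    rw [map_add, map_add, qw_single, qw_single, qw_single]
    simp only [_root_.smul_apply, ContinuousLinearMap.one_apply, inner_smul_right, inner_self_eq_norm_sq_to_K]
    have h1 : |(inner ℂ (w p.1) (T (w p.2))).re| ≤ ‖w p.1‖ * (‖T‖ * ‖w p.2‖) :=
      (Complex.abs_re_le_norm _).trans ((norm_inner_le_norm _ _).trans
        (mul_le_mul_of_nonneg_left (T.le_opNorm _) (norm_nonneg _)))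
    have h2 := (abs_le.1 h1).1
    have e : ∀ r : ℝ, ((‖T‖ : ℂ) * (r : ℂ) ^ 2).re = ‖T‖ * r ^ 2 := by
      intro r; norm_cast
    rw [Complex.add_re, Complex.add_re]
    erw [e, e]
    simp only [Algebra.algebraMap_self, RingHom.id_apply]
    nlinarith [norm_nonneg T, mul_nonneg (norm_nonneg T) (sq_nonneg (‖w p.1‖ - ‖w p.2‖)),
      mul_nonneg (norm_nonneg T) (sq_nonneg (‖w p.1‖)), mul_nonneg (norm_nonneg T) (sq_nonneg (‖w p.2‖))]

theorem sandwich (σ : A →⋆ₙₐ[ℂ] (H →L[ℂ] H)) (e a : A) (c : ℂ) (u v : H) :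
    inner ℂ u (σ (star e * a * e + c • (star e * e)) v)
      = inner ℂ (σ e u) ((σ a + c • 1) (σ e v)) := by
  rw [← ContinuousLinearMap.adjoint_inner_right, ← ContinuousLinearMap.star_eq_adjoint]
  congr 1
  rw [← map_star, map_add, map_mul, map_mul, map_smul, map_mul]
  simp

theorem nonnegD (ι : A →⋆ₙₐ[ℂ] (H →L[ℂ] H)) (hι : Function.Injective ι)
    (ρ : A →⋆ₙₐ[ℂ] (K →L[ℂ] K)) (hρ : NondegenerateRep ρ)
    (R : (H →L[ℂ] H) →ₗ[ℂ] (K →L[ℂ] K)) (hR : ∀ (a : A) (c : ℂ),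
      R (ι a + c • 1) = ρ a + c • 1) (M : EE H K) (hM : M ∈ DD H K ι)
    (hq : ∀ w : K → H, 0 ≤ (qw w M).re) : 0 ≤ (sR R M).re := by
  classical
  choose a c hac using hM
  obtain ⟨l, hl, l1, l2, l3, l4⟩ := exists_approxUnit A
  obtain ⟨S, hS⟩ : ∃ S : Finset K, M.support ⊆ S ×ˢ S :=
    ⟨M.support.image Prod.fst ∪ M.support.image Prod.snd, fun p hp => by
      rw [Finset.mem_product]
      exact ⟨Finset.mem_union_left _ (Finset.mem_image_of_mem _ hp),
        Finset.mem_union_right _ (Finset.mem_image_of_mem _ hp)⟩⟩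
  have hs : sR R M = ∑ u : S, ∑ v : S, inner ℂ (u : K) ((ρ (a (u, v)) + c (u, v) • 1) (v : K)) := by
    rw [sR, lsum_finset _ M S hS]
    refine Finset.sum_congr rfl fun u _ => Finset.sum_congr rfl fun v _ => ?_
    rw [LinearMap.comp_apply, hac, hR, mel_apply]
  have hqS : ∀ w : K → H, qw w M
      = ∑ u : S, ∑ v : S, inner ℂ (w u) ((ι (a (u, v)) + c (u, v) • 1) (w v)) := by
    intro w
    rw [qw, lsum_finset _ M S hS]
    refine Finset.sum_congr rfl fun u _ => Finset.sum_congr rfl fun v _ => ?_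
    rw [hac, mel_apply]
  have key : ∀ e : A, 0 ≤ (∑ u : S, ∑ v : S,
      inner ℂ (ρ e u) ((ρ (a (u, v)) + c (u, v) • 1) (ρ e v))).re := by
    intro e
    have := transfer_re (ν := S) ι hι ρ
      (Matrix.of fun u v : S => star e * a (u, v) * e + c (u, v) • (star e * e)) ?_ (fun u => (u : K))
    · simpa only [Matrix.of_apply, sandwich] using this
    · intro w
      have h := hq (fun u => if h : u ∈ S then ι e (w ⟨u, h⟩) else 0)
      rw [hqS] at h
      simpa only [Matrix.of_apply, sandwich, Finset.coe_mem, dite_true, Subtype.coe_eta] using h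
  rw [hs]
  have hlim : Tendsto (fun e : A => (∑ u : S, ∑ v : S,
      inner ℂ (ρ e u) ((ρ (a (u, v)) + c (u, v) • 1) (ρ e v))).re) l
      (𝓝 (∑ u : S, ∑ v : S, inner ℂ (u : K) ((ρ (a (u, v)) + c (u, v) • 1) (v : K))).re) := by
    refine (Complex.continuous_re.tendsto _).comp ?_
    refine tendsto_finsetSum _ fun u _ => tendsto_finsetSum _ fun v _ => ?_
    have t := approx_strong ρ hρ l l1 l3
    exact Filter.Tendsto.inner (t u) (((ρ (a (u, v)) + c (u, v) • 1).continuous.tendsto _).comp (t v))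
  exact ge_of_tendsto' hlim key

theorem dil_kernel (ι : A →⋆ₙₐ[ℂ] (H →L[ℂ] H)) (hι : Function.Injective ι)
    (ρ : A →⋆ₙₐ[ℂ] (K →L[ℂ] K)) (hρ : NondegenerateRep ρ) :
    ∃ κ : K → K → (H →L[ℂ] H) →ₗ[ℂ] ℂ, KPos κ ∧
      (∀ u v a, κ u v (ι a) = inner ℂ u (ρ a v)) ∧ ∀ u v, κ u v 1 = inner ℂ u v := by
  obtain ⟨R, hR⟩ := exists_linR ι hι ρ hρ
  obtain ⟨G, hG1, hG2⟩ := riesz_abs (sR R) (fun w : K → H => qw w) (DD H K ι)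
    (nonnegD ι hι ρ hρ R hR) (cofinal ι)
  have hD : ∀ u v a, ∀ c : ℂ, (Finsupp.single (u, v) (ι a + c • 1) : EE H K) ∈ DD H K ι := by
    intro u v a c p
    by_cases h : (u, v) = p
    · subst h; exact ⟨a, c, by simp⟩
    · exact ⟨0, 0, by simp [h]⟩
  have hv : ∀ u v a, ∀ c : ℂ, G (Finsupp.single (u, v) (ι a + c • 1)) = inner ℂ u ((ρ a + c • 1) v) := by
    intro u v a c
    rw [hG1 _ (hD u v a c), sR_single, hR]
  refine ⟨fun u v => G ∘ₗ Finsupp.lsingle (u, v), ?_, ?_, ?_⟩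
  · intro S a
    have e : ∑ i ∈ S, ∑ j ∈ S, (G ∘ₗ Finsupp.lsingle (i, j)) (star (a i) * a j)
        = G (∑ i ∈ S, ∑ j ∈ S, Finsupp.single (i, j) (star (a i) * a j)) := by
      simp [map_sum]
    rw [e]
    apply hG2
    intro w
    have e2 : qw w (∑ i ∈ S, ∑ j ∈ S, Finsupp.single (i, j) (star (a i) * a j))
        = inner ℂ (∑ i ∈ S, a i (w i)) (∑ i ∈ S, a i (w i)) := by
      rw [map_sum, sum_inner]
      refine Finset.sum_congr rfl fun i _ => ?_
      rw [map_sum, inner_sum]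
      refine Finset.sum_congr rfl fun j _ => ?_
      rw [qw_single, mul_apply_eq_comp, ContinuousLinearMap.star_eq_adjoint,
        ContinuousLinearMap.adjoint_inner_right]
    rw [e2]
    exact inner_self_nonneg_c _
  · intro u v a
    simpa using hv u v a 0
  · intro u v
    simpa using hv u v 0 1

/-- Dilation: a non-degenerate representation of `A` is a compression of (the restriction to `A`
of) a representation of `B(H)`. -/
theorem dilation {H : Type v} {K : Type w} [NormedAddCommGroup H] [InnerProductSpace ℂ H]
    [CompleteSpace H] [NormedAddCommGroup K] [InnerProductSpace ℂ K] [CompleteSpace K]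
    (ι : A →⋆ₙₐ[ℂ] (H →L[ℂ] H)) (hι : Function.Injective ι)
    (ρ : A →⋆ₙₐ[ℂ] (K →L[ℂ] K)) (hρ : NondegenerateRep ρ) :
    ∃ (L : Type (max v w)) (_ : NormedAddCommGroup L) (_ : InnerProductSpace ℂ L)
      (_ : CompleteSpace L) (π : (H →L[ℂ] H) →⋆ₙₐ[ℂ] (L →L[ℂ] L)) (J : K →L[ℂ] L),
      π 1 = 1 ∧ (∀ u, ‖J u‖ = ‖u‖) ∧
      ∀ u v a, inner ℂ (J u) (π (ι a) (J v)) = inner ℂ u (ρ a v) := by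
  obtain ⟨κ, hκ, h1, h2⟩ := dil_kernel ι hι ρ hρ
  have hin : ∀ u v, inner ℂ (gnsVec κ hκ u 1) (gnsVec κ hκ v 1) = inner ℂ u v := by
    intro u v
    rw [gnsVec_inner, star_one, one_mul, h2]
  let J0 : K →ₗ[ℂ] Completion (PreG κ hκ) :=
    { toFun := fun u => gnsVec κ hκ u 1
      map_add' := fun u v => by
        rw [← sub_eq_zero]
        apply inner_self_eq_zero (𝕜 := ℂ).1
        simp only [inner_sub_left, inner_sub_right, inner_add_left, inner_add_right, hin]
        ring
      map_smul' := fun c u => by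
        rw [← sub_eq_zero]
        apply inner_self_eq_zero (𝕜 := ℂ).1
        simp only [inner_sub_left, inner_sub_right, inner_smul_left, inner_smul_right, hin,
          RingHom.id_apply]
        ring }
  have hJn : ∀ u, ‖J0 u‖ = ‖u‖ := by
    intro u
    have : inner ℂ (J0 u) (J0 u) = inner ℂ u u := hin u u
    rw [@norm_eq_sqrt_re_inner ℂ, this, ← @norm_eq_sqrt_re_inner ℂ]
  refine ⟨Completion (PreG κ hκ), inferInstance, inferInstance, inferInstance, gnsRep κ hκ,
    J0.mkContinuous 1 (fun u => by rw [hJn, one_mul]), ?_, hJn, ?_⟩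
  · refine ContinuousLinearMap.ext_on (gnsVec_dense κ hκ) ?_
    rintro _ ⟨i, a, rfl⟩
    rw [gnsRep_vec, one_mul]
    rfl
  · intro u v a
    change inner ℂ (gnsVec κ hκ u 1) (gnsRep κ hκ (ι a) (gnsVec κ hκ v 1)) = _
    rw [gnsRep_vec, gnsVec_inner, star_one, one_mul, mul_one, h1]
end P5

section P6
open Filter Topology

variable {H : Type*} [NormedAddCommGroup H] [InnerProductSpace ℂ H] [CompleteSpace H]
variable {L : Type*} [NormedAddCommGroup L] [InnerProductSpace ℂ L] [CompleteSpace L]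
variable {ν : Type*} [Fintype ν]

/-- form bound -/
def FB (M : Matrix ν ν (H →L[ℂ] H)) (c : ℝ) : Prop :=
  ∀ w w' : ν → H, ‖∑ i, ∑ j, inner ℂ (w i) (M i j (w' j))‖
    ≤ c * √(∑ i, ‖w i‖ ^ 2) * √(∑ i, ‖w' i‖ ^ 2)

theorem norm_toLp (w : ν → H) : ‖(WithLp.toLp 2 w : PiLp 2 (fun _ : ν => H))‖ = √(∑ i, ‖w i‖ ^ 2) := by
  rw [PiLp.norm_eq_of_L2]

theorem norm_le_imp_fb (M : Matrix ν ν (H →L[ℂ] H)) (c : ℝ) (h : ‖matOp M‖ ≤ c) : FB M c := by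
  intro w w'
  rw [← norm_toLp, ← norm_toLp]
  have := inner_matOp M (WithLp.toLp 2 w) (WithLp.toLp 2 w')
  rw [← this]
  calc _ ≤ _ := norm_inner_le_norm _ _
    _ ≤ ‖(WithLp.toLp 2 w : PiLp 2 (fun _ : ν => H))‖ * (c * ‖(WithLp.toLp 2 w' : PiLp 2 (fun _ : ν => H))‖) := by
      gcongr
      exact ((matOp M).le_opNorm _).trans (by gcongr)
    _ = _ := by ring

theorem fb_imp_norm (M : Matrix ν ν (H →L[ℂ] H)) (c : ℝ) (hc : 0 ≤ c) (h : FB M c) :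
    ‖matOp M‖ ≤ c := by
  refine ContinuousLinearMap.opNorm_le_bound _ hc fun g => ?_
  have h1 := h (WithLp.ofLp (matOp M g)) (WithLp.ofLp g)
  rw [← norm_toLp, ← norm_toLp, WithLp.toLp_ofLp, WithLp.toLp_ofLp] at h1
  have h2 := inner_matOp M (matOp M g) g
  rw [← h2, inner_self_eq_norm_sq_to_K, norm_pow] at h1
  simp only [Complex.coe_algebraMap, Complex.norm_real, norm_norm] at h1
  rcases (norm_nonneg (matOp M g)).eq_or_lt with h0 | h0
  · rw [← h0]; positivity
  · nlinarith

theorem fb_col (M : Matrix ν ν (H →L[ℂ] H)) (c : ℝ) (hc : 0 ≤ c) :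
    FB M c ↔ ∀ w : ν → H, ∑ k, ‖∑ j, M k j (w j)‖ ^ 2 ≤ c ^ 2 * ∑ i, ‖w i‖ ^ 2 := by
  have e : ∀ w : ν → H, ∑ k, ‖∑ j, M k j (w j)‖ ^ 2 = ‖matOp M (WithLp.toLp 2 w)‖ ^ 2 := by
    intro w
    rw [PiLp.norm_sq_eq_of_L2]
    refine Finset.sum_congr rfl fun k _ => ?_
    rw [matOp_apply]
  have e' : ∀ w : ν → H, ∑ k, ‖w k‖ ^ 2 = ‖(WithLp.toLp 2 w : PiLp 2 (fun _ : ν => H))‖ ^ 2 := by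
    intro w
    rw [PiLp.norm_sq_eq_of_L2]
  constructor
  · intro h w
    have := fb_imp_norm M c hc h
    rw [e, e', ← mul_pow]
    gcongr
    exact ((matOp M).le_opNorm _).trans (by gcongr)
  · intro h
    apply norm_le_imp_fb
    refine ContinuousLinearMap.opNorm_le_bound _ hc fun g => ?_
    have := h (WithLp.ofLp g)
    rw [e, e', WithLp.toLp_ofLp, ← mul_pow] at this
    exact (sq_le_sq₀ (norm_nonneg _) (by positivity)).1 this

theorem quad_defect [DecidableEq ν] (P : Matrix ν ν (H →L[ℂ] H)) (c : ℝ) (w : ν → H) :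
    ∑ i, ∑ j, inner ℂ (w i) (((((c ^ 2 : ℝ) : ℂ) • (1 : Matrix ν ν (H →L[ℂ] H)) - Pᴴ * P) i j) (w j))
      = ((c ^ 2 * ∑ i, ‖w i‖ ^ 2 - ∑ k, ‖∑ j, P k j (w j)‖ ^ 2 : ℝ) : ℂ) := by
  have h1 := quad_gram P w
  simp only [Matrix.sub_apply, _root_.sub_apply, inner_sub_right, Finset.sum_sub_distrib]
  rw [h1]
  push_cast
  congr 1
  · rw [Finset.mul_sum]
    refine Finset.sum_congr rfl fun i _ => ?_
    rw [Finset.sum_eq_single i]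
    · simp [inner_smul_right, inner_self_eq_norm_sq_to_K]
    · intro j _ hj
      simp [Matrix.one_apply_ne hj.symm]
    · simp
  · refine Finset.sum_congr rfl fun i _ => ?_
    simp [inner_self_eq_norm_sq_to_K]

theorem qPos_map (π : (H →L[ℂ] H) →⋆ₙₐ[ℂ] (L →L[ℂ] L)) (P : Matrix ν ν (H →L[ℂ] H))
    (h : QPos P) : QPos (P.map π) := by
  classical
  obtain ⟨N, rfl⟩ := qPos_imp_matPos h
  rw [map_mul', map_conjT]
  exact qPos_gram _

theorem fb_map (π : (H →L[ℂ] H) →⋆ₙₐ[ℂ] (L →L[ℂ] L)) (hπ : π 1 = 1)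
    (P : Matrix ν ν (H →L[ℂ] H)) (c : ℝ) (hc : 0 ≤ c)
    (h : FB P c) : FB (P.map π) c := by
  classical
  rw [fb_col _ _ hc] at h ⊢
  have h1 : QPos (((c ^ 2 : ℝ) : ℂ) • (1 : Matrix ν ν (H →L[ℂ] H)) - Pᴴ * P) := by
    intro w
    rw [quad_defect]
    exact Complex.zero_le_real.2 (by linarith [h w])
  have h2 := qPos_map π _ h1
  have e : (((c ^ 2 : ℝ) : ℂ) • (1 : Matrix ν ν (H →L[ℂ] H)) - Pᴴ * P).map π
      = ((c ^ 2 : ℝ) : ℂ) • (1 : Matrix ν ν (L →L[ℂ] L)) - (P.map π)ᴴ * P.map π := by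
    rw [← map_conjT, ← map_mul']
    ext1 i j
    rw [Matrix.map_apply, Matrix.sub_apply, Matrix.sub_apply, map_sub, Matrix.smul_apply,
      Matrix.smul_apply, map_smul, Matrix.map_apply]
    congr 2
    by_cases hij : i = j
    · subst hij; simp [hπ]
    · simp [hij]
  rw [e] at h2
  intro w
  have := h2 w
  rw [quad_defect] at this
  have := Complex.zero_le_real.1 this
  linarith

/-- weak operator limits of maps -/
theorem wot_lim {E : Type*} [NormedAddCommGroup E] [InnerProductSpace ℂ E] [CompleteSpace E]
    {α : Type*} (U : Ultrafilter α) (Φ : α → (E →L[ℂ] E) →ₗ[ℂ] (E →L[ℂ] E)) (C : ℝ)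
    (hC : ∀ F T, ‖Φ F T‖ ≤ C * ‖T‖) :
    ∃ Ψ : (E →L[ℂ] E) →ₗ[ℂ] (E →L[ℂ] E), ∀ T f g,
      Tendsto (fun F => inner ℂ f (Φ F T g)) U (𝓝 (inner ℂ f (Ψ T g))) := by
  have hw : ∀ T g, ∃ x : E, ‖x‖ ≤ C * ‖T‖ * ‖g‖ ∧
      ∀ f, Tendsto (fun F => inner ℂ f (Φ F T g)) U (𝓝 (inner ℂ f x)) := by
    intro T g
    obtain ⟨x, hx, h⟩ := weak_lim U (fun F => Φ F T g) (C * ‖T‖ * ‖g‖) (Eventually.of_forall fun F =>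
      ((Φ F T).le_opNorm g).trans (mul_le_mul_of_nonneg_right (hC F T) (norm_nonneg _)))
    refine ⟨x, hx, fun f => ?_⟩
    have := (Complex.continuous_conj.tendsto _).comp (h f)
    rw [inner_conj_symm] at this
    refine this.congr fun F => ?_
    exact inner_conj_symm _ _
  choose x hx1 hx2 using hw
  have uniq : ∀ y z : E, (∀ f, inner ℂ f y = inner ℂ f z) → y = z := fun y z h => ext_inner_left ℂ h
  let Ψ0 : (E →L[ℂ] E) → (E →L[ℂ] E) := fun T => LinearMap.mkContinuous
    { toFun := x T
      map_add' := fun g g' => uniq _ _ fun f => tendsto_nhds_unique (hx2 T (g + g') f) (by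
        simp only [map_add, inner_add_right]
        exact (hx2 T g f).add (hx2 T g' f))
      map_smul' := fun c g => uniq _ _ fun f => tendsto_nhds_unique (hx2 T (c • g) f) (by
        simp only [map_smul, inner_smul_right, RingHom.id_apply]
        exact (hx2 T g f).const_mul c) } (C * ‖T‖) (hx1 T)
  refine ⟨{ toFun := Ψ0
            map_add' := fun S T => ?_
            map_smul' := fun c T => ?_ }, fun T f g => hx2 T g f⟩
  · ext1 g
    refine uniq _ _ fun f => tendsto_nhds_unique (hx2 (S + T) g f) ?_
    simp only [map_add, _root_.add_apply, inner_add_right]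
    exact (hx2 S g f).add (hx2 T g f)
  · ext1 g
    refine uniq _ _ fun f => tendsto_nhds_unique (hx2 (c • T) g f) ?_
    simp only [map_smul, _root_.smul_apply, inner_smul_right, RingHom.id_apply]
    exact (hx2 T g f).const_mul c

end P6

section P7
open Filter Topology

variable {H : Type*} [NormedAddCommGroup H] [InnerProductSpace ℂ H] [CompleteSpace H]
variable {L : Type*} [NormedAddCommGroup L] [InnerProductSpace ℂ L] [CompleteSpace L]
variable {X : Type*}

theorem lpEval_apply (x : X) (f : lp (fun _ : X => H) 2) : lpEval x f = f x := rfl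

theorem inner_lpSingle_right (x : X) (f : lp (fun _ : X => H) 2) (h : H) :
    inner ℂ f (lpSingle x h) = inner ℂ (f x) h := by
  classical
  have : (lpSingle x h : lp (fun _ : X => H) 2) = lp.single 2 x h := by
    simp only [lpSingle, LinearMap.mkContinuous_apply, LinearMap.coe_mk, AddHom.coe_mk]
  rw [this, lp.inner_single_right]

theorem inner_lpSingle_left (x : X) (f : lp (fun _ : X => H) 2) (h : H) :
    inner ℂ (lpSingle x h) f = inner ℂ h (f x) := by
  rw [← inner_conj_symm, inner_lpSingle_right, inner_conj_symm]

theorem lpSingle_same (x : X) (h : H) : (lpSingle x h : lp (fun _ : X => H) 2) x = h := by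
  refine ext_inner_left ℂ fun v => ?_
  rw [← inner_lpSingle_left]
  classical
  simp only [lpSingle, LinearMap.mkContinuous_apply, LinearMap.coe_mk, AddHom.coe_mk]
  rw [lp.inner_single_left, lp.single_apply_self]

theorem lpSingle_ne {x y : X} (hxy : y ≠ x) (h : H) :
    (lpSingle x h : lp (fun _ : X => H) 2) y = 0 := by
  classical
  simp only [lpSingle, LinearMap.mkContinuous_apply, LinearMap.coe_mk, AddHom.coe_mk]
  rw [lp.single_apply_ne _ _ _ hxy]

theorem inner_single_single [DecidableEq X] (x y : X) (h k : H) :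
    inner ℂ (lpSingle x h : lp (fun _ : X => H) 2) (lpSingle y k) = if x = y then inner ℂ h k else 0 := by
  rw [inner_lpSingle_left]
  split_ifs with hh
  · subst hh; rw [lpSingle_same]
  · rw [lpSingle_ne hh, inner_zero_right]

theorem norm_sum_single (F : Finset X) (w : F → H) :
    ‖∑ x : F, (lpSingle (x : X) (w x) : lp (fun _ : X => H) 2)‖ ^ 2 = ∑ x, ‖w x‖ ^ 2 := by
  classical
  have : ((‖∑ x : F, (lpSingle (x : X) (w x) : lp (fun _ : X => H) 2)‖ ^ 2 : ℝ) : ℂ)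
      = ((∑ x, ‖w x‖ ^ 2 : ℝ) : ℂ) := by
    have h := @inner_self_eq_norm_sq_to_K ℂ _ _ _ _ (∑ x : F, (lpSingle (x : X) (w x) : lp (fun _ : X => H) 2))
    push_cast
    refine Eq.trans h.symm ?_
    rw [sum_inner]
    refine Finset.sum_congr rfl fun x _ => ?_
    rw [inner_sum, Finset.sum_eq_single x]
    · rw [inner_single_single, if_pos rfl, inner_self_eq_norm_sq_to_K]; rfl
    · intro y _ hy
      rw [inner_single_single, if_neg (fun h => hy (Subtype.ext h.symm))]
    · simp
  exact_mod_cast this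

theorem sum_sq_le (F : Finset X) (f : lp (fun _ : X => H) 2) :
    ∑ x : F, ‖f x‖ ^ 2 ≤ ‖f‖ ^ 2 := by
  have := lp.sum_rpow_le_norm_rpow (p := 2) (by norm_num) f F
  simp only [ENNReal.toReal_ofNat, Real.rpow_ofNat] at this
  rwa [Finset.sum_coe_sort F (fun x => ‖f x‖ ^ 2)]

theorem inner_elemOp (x y : X) (T : H →L[ℂ] H) (f g : lp (fun _ : X => H) 2) :
    inner ℂ f (elemOp x y T g) = inner ℂ (f x) (T (g y)) := by
  simp only [elemOp, ContinuousLinearMap.comp_apply, inner_lpSingle_right, lpEval_apply]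

/-- corner of an operator -/
def cor (x y : X) : (lp (fun _ : X => H) 2 →L[ℂ] lp (fun _ : X => H) 2) →ₗ[ℂ] (H →L[ℂ] H) :=
  { toFun := fun T => (lpEval x) ∘L T ∘L (lpSingle y)
    map_add' := fun S T => by ext v; simp
    map_smul' := fun c T => by ext v; simp }

theorem inner_cor (x y : X) (T : lp (fun _ : X => H) 2 →L[ℂ] lp (fun _ : X => H) 2) (u v : H) :
    inner ℂ u (cor x y T v) = inner ℂ (lpSingle x u) (T (lpSingle y v)) := by
  rw [inner_lpSingle_left]
  rfl

variable (π : (H →L[ℂ] H) →⋆ₙₐ[ℂ] (L →L[ℂ] L)) (V : X → (H →L[ℂ] L))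

def elemL (x y : X) : (H →L[ℂ] H) →ₗ[ℂ] (lp (fun _ : X => H) 2 →L[ℂ] lp (fun _ : X => H) 2) :=
  { toFun := fun T => elemOp x y T
    map_add' := fun S T => by
      ext1 g; refine ext_inner_left ℂ fun f => ?_
      rw [_root_.add_apply, inner_add_right]
      simp only [inner_elemOp, _root_.add_apply, inner_add_right]
    map_smul' := fun c T => by
      ext1 g; refine ext_inner_left ℂ fun f => ?_
      rw [_root_.smul_apply, inner_smul_right]
      simp only [inner_elemOp, _root_.smul_apply, inner_smul_right, RingHom.id_apply] }

def conjL (x y : X) : (L →L[ℂ] L) →ₗ[ℂ] (H →L[ℂ] H) :=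
  { toFun := fun T => ContinuousLinearMap.adjoint (V x) ∘L T ∘L V y
    map_add' := fun S T => by ext v; simp
    map_smul' := fun c T => by ext v; simp }

/-- finite corner approximations -/
def PsiF (F : Finset X) : (lp (fun _ : X => H) 2 →L[ℂ] lp (fun _ : X => H) 2) →ₗ[ℂ]
    (lp (fun _ : X => H) 2 →L[ℂ] lp (fun _ : X => H) 2) :=
  ∑ x : F, ∑ y : F, elemL (x : X) (y : X) ∘ₗ conjL V (x : X) (y : X) ∘ₗ iotaLin π ∘ₗ cor (x : X) (y : X)

theorem inner_PsiF (F : Finset X) (T : lp (fun _ : X => H) 2 →L[ℂ] lp (fun _ : X => H) 2)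
    (f g : lp (fun _ : X => H) 2) :
    inner ℂ f (PsiF π V F T g)
      = ∑ x : F, ∑ y : F, inner ℂ (V x (f x)) (π (cor (x : X) (y : X) T) (V y (g y))) := by
  simp only [PsiF, LinearMap.sum_apply, _root_.sum_apply, inner_sum]
  refine Finset.sum_congr rfl fun x _ => Finset.sum_congr rfl fun y _ => ?_
  rw [← ContinuousLinearMap.adjoint_inner_right]
  exact inner_elemOp _ _ _ _ _

variable {n : Type*} [Fintype n]

/-- the matrix of corners -/
def corM (F : Finset X) (M : Matrix n n (lp (fun _ : X => H) 2 →L[ℂ] lp (fun _ : X => H) 2)) :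
    Matrix (n × F) (n × F) (H →L[ℂ] H) :=
  Matrix.of fun p q => cor (p.2 : X) (q.2 : X) (M p.1 q.1)

theorem sum_rearr (F : Finset X) (G : n → F → n → F → ℂ) :
    ∑ p : n × F, ∑ q : n × F, G p.1 p.2 q.1 q.2 = ∑ i, ∑ j, ∑ x, ∑ y, G i x j y := by
  rw [Fintype.sum_prod_type]
  refine Finset.sum_congr rfl fun i _ => ?_
  refine Eq.trans (b := ∑ x, ∑ j, ∑ y, G i x j y) ?_ Finset.sum_comm
  refine Finset.sum_congr rfl fun x _ => ?_
  rw [Fintype.sum_prod_type]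

theorem form_PsiF (F : Finset X) (M : Matrix n n (lp (fun _ : X => H) 2 →L[ℂ] lp (fun _ : X => H) 2))
    (f g : n → lp (fun _ : X => H) 2) :
    ∑ i, ∑ j, inner ℂ (f i) (PsiF π V F (M i j) (g j))
      = ∑ p, ∑ q, inner ℂ (V p.2 (f p.1 p.2)) (((corM F M).map π) p q (V q.2 (g q.1 q.2))) := by
  simp only [inner_PsiF]
  exact (sum_rearr F (fun i x j y => inner ℂ (V x (f i x)) (π (cor (x : X) (y : X) (M i j)) (V y (g j y))))).symm

theorem form_corM (F : Finset X) (M : Matrix n n (lp (fun _ : X => H) 2 →L[ℂ] lp (fun _ : X => H) 2))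
    (w w' : n × F → H) :
    ∑ p, ∑ q, inner ℂ (w p) (corM F M p q (w' q))
      = ∑ i, ∑ j, inner ℂ (∑ x : F, (lpSingle (x : X) (w (i, x)) : lp (fun _ : X => H) 2))
          (M i j (∑ y : F, (lpSingle (y : X) (w' (j, y)) : lp (fun _ : X => H) 2))) := by
  have := sum_rearr F (fun i x j y => inner ℂ (w (i, x)) (cor (x : X) (y : X) (M i j) (w' (j, y))))
  refine Eq.trans this ?_
  refine Finset.sum_congr rfl fun i _ => Finset.sum_congr rfl fun j _ => ?_
  simp only [inner_cor, sum_inner, map_sum, inner_sum]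
  exact Finset.sum_comm

theorem corM_qPos (F : Finset X) (M : Matrix n n (lp (fun _ : X => H) 2 →L[ℂ] lp (fun _ : X => H) 2))
    (h : QPos M) : QPos (corM F M) := by
  intro w
  rw [form_corM]
  exact h _

theorem corM_fb (F : Finset X) (M : Matrix n n (lp (fun _ : X => H) 2 →L[ℂ] lp (fun _ : X => H) 2))
    (c : ℝ) (h : FB M c) : FB (corM F M) c := by
  intro w w'
  rw [form_corM]
  refine (h _ _).trans (le_of_eq ?_)
  simp only [norm_sum_single, Fintype.sum_prod_type]

theorem PsiF_qPos (F : Finset X) (M : Matrix n n (lp (fun _ : X => H) 2 →L[ℂ] lp (fun _ : X => H) 2))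
    (h : QPos M) : QPos (M.map (PsiF π V F)) := by
  intro f
  have := form_PsiF π V F M f f
  simp only [Matrix.map_apply] at this ⊢
  rw [this]
  exact qPos_map π _ (corM_qPos F M h) _

theorem PsiF_fb (hπ : π 1 = 1) (C : ℝ) (hV : ∀ x, ‖V x‖ ≤ √C) (hC : 0 ≤ C) (F : Finset X)
    (M : Matrix n n (lp (fun _ : X => H) 2 →L[ℂ] lp (fun _ : X => H) 2))
    (c : ℝ) (hc : 0 ≤ c) (h : FB M c) : FB (M.map (PsiF π V F)) (C * c) := by
  intro f g
  have := form_PsiF π V F M f g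
  simp only [Matrix.map_apply] at this ⊢
  rw [this]
  have bd : ∀ f : n → lp (fun _ : X => H) 2,
      √(∑ p : n × F, ‖V p.2 (f p.1 p.2)‖ ^ 2) ≤ √C * √(∑ i, ‖f i‖ ^ 2) := by
    intro f
    rw [← Real.sqrt_mul hC]
    apply Real.sqrt_le_sqrt
    rw [Fintype.sum_prod_type, Finset.mul_sum]
    refine Finset.sum_le_sum fun i _ => ?_
    calc _ ≤ ∑ x : F, C * ‖f i x‖ ^ 2 := by
          refine Finset.sum_le_sum fun x _ => ?_
          have : ‖V x (f i x)‖ ≤ √C * ‖f i x‖ := ((V x).le_opNorm _).trans (by gcongr; exact hV _)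
          calc _ ≤ (√C * ‖f i x‖) ^ 2 := by gcongr
            _ = _ := by rw [mul_pow, Real.sq_sqrt hC]
      _ = C * ∑ x : F, ‖f i x‖ ^ 2 := by rw [Finset.mul_sum]
      _ ≤ _ := by gcongr; exact sum_sq_le F (f i)
  refine (fb_map π hπ _ c hc (corM_fb F M c h) _ _).trans ?_
  calc _ ≤ c * (√C * √(∑ i, ‖f i‖ ^ 2)) * (√C * √(∑ i, ‖g i‖ ^ 2)) := by
        gcongr
        · exact bd f
        · exact bd g
    _ = (√C * √C) * c * √(∑ i, ‖f i‖ ^ 2) * √(∑ i, ‖g i‖ ^ 2) := by ring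
    _ = _ := by rw [Real.mul_self_sqrt hC]

theorem PsiF_norm (hπ : π 1 = 1) (C : ℝ) (hV : ∀ x, ‖V x‖ ≤ √C) (hC : 0 ≤ C) (F : Finset X)
    (T : lp (fun _ : X => H) 2 →L[ℂ] lp (fun _ : X => H) 2) : ‖PsiF π V F T‖ ≤ C * ‖T‖ := by
  have h0 : FB (Matrix.of fun _ _ : Unit => T) ‖T‖ := by
    intro w w'
    simp only [Finset.univ_unique, Finset.sum_singleton, Matrix.of_apply,
      Real.sqrt_sq (norm_nonneg _)]
    refine (norm_inner_le_norm _ _).trans ?_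
    have := T.le_opNorm (w' default)
    have := mul_le_mul_of_nonneg_left this (norm_nonneg (w default))
    linarith
  have h1 := PsiF_fb π V hπ C hV hC F _ _ (norm_nonneg T) h0
  refine ContinuousLinearMap.opNorm_le_bound _ (by positivity) fun g => ?_
  have h2 := h1 (fun _ => PsiF π V F T g) (fun _ => g)
  simp only [Finset.univ_unique, Finset.sum_singleton, Matrix.of_apply, Matrix.map_apply,
      Real.sqrt_sq (norm_nonneg _), inner_self_eq_norm_sq_to_K, norm_pow] at h2
  simp only [Complex.coe_algebraMap, Complex.norm_real, norm_norm] at h2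
  rcases (norm_nonneg (PsiF π V F T g)).eq_or_lt with h0 | h0
  · rw [← h0]; positivity
  · nlinarith

theorem exists_Psi (hπ : π 1 = 1) (C : ℝ) (hV : ∀ x, ‖V x‖ ≤ √C) (hC : 0 ≤ C) :
    ∃ Ψ : (lp (fun _ : X => H) 2 →L[ℂ] lp (fun _ : X => H) 2) →ₗ[ℂ]
      (lp (fun _ : X => H) 2 →L[ℂ] lp (fun _ : X => H) 2),
      (∀ (n : ℕ) (M : Matrix (Fin n) (Fin n) _), QPos M → QPos (M.map Ψ)) ∧
      (∀ (n : ℕ) (M : Matrix (Fin n) (Fin n) _) (c : ℝ), 0 ≤ c → FB M c → FB (M.map Ψ) (C * c)) ∧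
      (∀ T S, (∀ f g, ∀ᶠ F in atTop, inner ℂ f (PsiF π V F T g) = inner ℂ f (S g)) → Ψ T = S) := by
  let U : Ultrafilter (Finset X) := Ultrafilter.of atTop
  have hU : (U : Filter (Finset X)) ≤ atTop := Ultrafilter.of_le _
  obtain ⟨Ψ, hΨ⟩ := wot_lim U (fun F => PsiF π V F) C (PsiF_norm π V hπ C hV hC)
  refine ⟨Ψ, fun n M hM w => ?_, fun n M c hc hM w w' => ?_, fun T S h => ?_⟩
  · have : Tendsto (fun F => ∑ i, ∑ j, inner ℂ (w i) (M.map (PsiF π V F) i j (w j))) U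
        (𝓝 (∑ i, ∑ j, inner ℂ (w i) (M.map Ψ i j (w j)))) :=
      tendsto_finsetSum _ fun i _ => tendsto_finsetSum _ fun j _ => hΨ _ _ _
    exact ge_of_tendsto' this fun F => PsiF_qPos π V F M hM w
  · have : Tendsto (fun F => ∑ i, ∑ j, inner ℂ (w i) (M.map (PsiF π V F) i j (w' j))) U
        (𝓝 (∑ i, ∑ j, inner ℂ (w i) (M.map Ψ i j (w' j)))) :=
      tendsto_finsetSum _ fun i _ => tendsto_finsetSum _ fun j _ => hΨ _ _ _
    exact le_of_tendsto' this.norm fun F => PsiF_fb π V hπ C hV hC F M c hc hM w w'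
  · ext1 g
    refine ext_inner_left ℂ fun f => ?_
    refine tendsto_nhds_unique (hΨ T f g) ?_
    exact tendsto_const_nhds.congr' ((Filter.Eventually.filter_mono hU (h f g)).mono fun F hF => hF.symm)

end P7

section P8
open Filter Topology

variable {H : Type*} [NormedAddCommGroup H] [InnerProductSpace ℂ H] [CompleteSpace H]
variable {A : Type*} [NonUnitalCStarAlgebra A]
variable {X : Type*}

theorem inner_TOp (k : X × X → (H →L[ℂ] H)) (S : Finset (X × X)) (hS : ∀ p, p ∉ S → k p = 0)
    (f g : lp (fun _ : X => H) 2) :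
    inner ℂ f (TOp k g) = ∑ p ∈ S, inner ℂ (f p.1) (k p (g p.2)) := by
  have : TOp k = ∑ p ∈ S, elemOp p.1 p.2 (k p) := by
    refine finsum_eq_sum_of_support_subset _ fun p hp => ?_
    by_contra hpS
    refine hp ?_
    simp only [hS p hpS]
    ext1 g; refine ext_inner_left ℂ fun f => ?_
    rw [inner_elemOp]; simp
  rw [this, _root_.sum_apply, inner_sum]
  exact Finset.sum_congr rfl fun p _ => inner_elemOp _ _ _ _ _

theorem cor_TOp (k : X × X → (H →L[ℂ] H)) (hk : (Function.support k).Finite) (x y : X) :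
    cor x y (TOp k) = k (x, y) := by
  classical
  ext1 v
  refine ext_inner_left ℂ fun u => ?_
  rw [inner_cor, inner_TOp k (hk.toFinset ∪ {(x, y)})]
  · rw [Finset.sum_eq_single (x, y)]
    · simp only [lpSingle_same]
    · rintro ⟨a, b⟩ _ hab
      by_cases ha : a = x
      · have hb : b ≠ y := fun hb => hab (by rw [ha, hb])
        simp only [lpSingle_ne hb, map_zero, inner_zero_right]
      · simp only [lpSingle_ne ha, inner_zero_left]
    · simp
  · intro p hp
    simp only [Finset.mem_union, Set.Finite.mem_toFinset, Function.mem_support, not_or, not_not] at hp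
    exact hp.1

theorem support_comp {B C : Type*} [Zero B] [Zero C] (k : X × X → B) (g : X × X → B → C)
    (hg : ∀ p, g p 0 = 0) (hk : (Function.support k).Finite) :
    (Function.support fun p => g p (k p)).Finite := by
  refine hk.subset fun p hp hkp => hp ?_
  simp only [hkp, hg]

variable {L : Type*} [NormedAddCommGroup L] [InnerProductSpace ℂ L] [CompleteSpace L]

theorem PsiF_TKer (ι : A →⋆ₙₐ[ℂ] (H →L[ℂ] H)) (φ : X → X → (A →ₗ[ℂ] (H →L[ℂ] H)))
    (π : (H →L[ℂ] H) →⋆ₙₐ[ℂ] (L →L[ℂ] L)) (V : X → (H →L[ℂ] L))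
    (hV : ∀ x y a u v, inner ℂ (V x u) (π (ι a) (V y v)) = inner ℂ u (φ x y a v))
    (k : X × X → A) (hk : (Function.support k).Finite) (f g : lp (fun _ : X => H) 2) :
    ∀ᶠ F in atTop, inner ℂ f (PsiF π V F (TKer ι k) g)
      = inner ℂ f (TOp (fun p => φ p.1 p.2 (k p)) g) := by
  classical
  let F0 : Finset X := hk.toFinset.image Prod.fst ∪ hk.toFinset.image Prod.snd
  filter_upwards [eventually_ge_atTop F0] with F hF
  rw [inner_PsiF, inner_TOp _ (F ×ˢ F)]
  · rw [Finset.sum_product, ← Finset.sum_coe_sort F]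
    refine Finset.sum_congr rfl fun x _ => ?_
    rw [← Finset.sum_coe_sort F]
    refine Finset.sum_congr rfl fun y _ => ?_
    rw [TKer, cor_TOp _ (support_comp k (fun _ a => ι a) (fun _ => map_zero ι) hk), hV]
  · intro p hp
    have : k p = 0 := by
      by_contra hkp
      refine hp (Finset.mem_product.2 ⟨hF ?_, hF ?_⟩)
      · exact Finset.mem_union_left _ (Finset.mem_image_of_mem _ (hk.mem_toFinset.2 hkp))
      · exact Finset.mem_union_right _ (Finset.mem_image_of_mem _ (hk.mem_toFinset.2 hkp))
    rw [this, map_zero]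

theorem cbBound_cbNorm (ι : A →⋆ₙₐ[ℂ] (H →L[ℂ] H)) (Φ : A →ₗ[ℂ] (H →L[ℂ] H))
    (h : ∃ C : ℝ, 0 ≤ C ∧ CBBound (fun a => ι a) (fun T => T) Φ C) :
    CBBound (fun a => ι a) (fun T => T) Φ (cbNorm (fun a => ι a) (fun T => T) Φ) := by
  intro n M
  obtain ⟨C, hC0, hC⟩ := h
  rcases (norm_nonneg (matOp (M.map (fun a => ι a)))).eq_or_lt with h0 | h0
  · have := hC n M
    rw [← h0] at this ⊢
    simpa using this
  · rw [← div_le_iff₀ h0]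
    refine le_csInf ⟨C, hC0, hC⟩ fun D hD => ?_
    rw [div_le_iff₀ h0]
    exact hD.2 n M

theorem cbNorm_nonneg (ι : A →⋆ₙₐ[ℂ] (H →L[ℂ] H)) (Φ : A →ₗ[ℂ] (H →L[ℂ] H)) :
    0 ≤ cbNorm (fun a => ι a) (fun T => T) Φ := Real.sInf_nonneg fun _ h => h.1

theorem norm_matOp_one (T : H →L[ℂ] H) : ‖matOp (Matrix.of fun _ _ : Fin 1 => T)‖ = ‖T‖ := by
  apply le_antisymm
  · refine fb_imp_norm _ _ (norm_nonneg _) fun w w' => ?_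
    simp only [Finset.univ_unique, Finset.sum_singleton, Matrix.of_apply,
      Real.sqrt_sq (norm_nonneg _)]
    refine (norm_inner_le_norm _ _).trans ?_
    have := T.le_opNorm (w' default)
    have := mul_le_mul_of_nonneg_left this (norm_nonneg (w default))
    linarith
  · refine ContinuousLinearMap.opNorm_le_bound _ (norm_nonneg _) fun g => ?_
    have h2 := norm_le_imp_fb _ _ (le_refl ‖matOp (Matrix.of fun _ _ : Fin 1 => T)‖)
      (fun _ => T g) (fun _ => g)
    simp only [Finset.univ_unique, Finset.sum_singleton, Matrix.of_apply,
      Real.sqrt_sq (norm_nonneg _), inner_self_eq_norm_sq_to_K, norm_pow] at h2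
    simp only [Complex.coe_algebraMap, Complex.norm_real, norm_norm] at h2
    rcases (norm_nonneg (T g)).eq_or_lt with h0 | h0
    · rw [← h0]; positivity
    · nlinarith

theorem cbBound_one (ι : A →⋆ₙₐ[ℂ] (H →L[ℂ] H)) (hisom : ∀ a : A, ‖ι a‖ = ‖a‖)
    (Φ : A →ₗ[ℂ] (H →L[ℂ] H)) (C : ℝ)
    (h : CBBound (fun a => ι a) (fun T => T) Φ C) (a : A) : ‖Φ a‖ ≤ C * ‖a‖ := by
  have := h 1 (Matrix.of fun _ _ => a)
  have e1 : (Matrix.of fun _ _ : Fin 1 => a).map (fun a => Φ a) = Matrix.of fun _ _ => Φ a := rfl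
  have e2 : (Matrix.of fun _ _ : Fin 1 => a).map (fun a => ι a) = Matrix.of fun _ _ => ι a := rfl
  rw [e1, e2, norm_matOp_one, norm_matOp_one, hisom] at this
  exact this

theorem iota_inj (ι : A →⋆ₙₐ[ℂ] (H →L[ℂ] H)) (hisom : ∀ a : A, ‖ι a‖ = ‖a‖) :
    Function.Injective ι := by
  intro a b hab
  have : ‖ι (a - b)‖ = 0 := by rw [map_sub, hab, sub_self, norm_zero]
  rw [hisom, norm_eq_zero] at this
  exact sub_eq_zero.1 this

theorem bdd_cb (ι : A →⋆ₙₐ[ℂ] (H →L[ℂ] H)) (φ : X → X → (A →ₗ[ℂ] (H →L[ℂ] H)))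
    (hbdd : ∃ C : ℝ, 0 ≤ C ∧ ∀ x y : X, CBBound (fun a => ι a) (fun T => T) (φ x y) C) :
    BddAbove (Set.range fun x => cbNorm (fun a => ι a) (fun T => T) (φ x x)) := by
  obtain ⟨C, hC0, hC⟩ := hbdd
  refine ⟨C, ?_⟩
  rintro _ ⟨x, rfl⟩
  exact csInf_le ⟨0, fun _ h => h.1⟩ ⟨hC0, hC x x⟩

theorem stine' (ι : A →⋆ₙₐ[ℂ] (H →L[ℂ] H)) (hisom : ∀ a : A, ‖ι a‖ = ‖a‖)
    (φ : X → X → (A →ₗ[ℂ] (H →L[ℂ] H)))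
    (hbdd : ∃ C : ℝ, 0 ≤ C ∧ ∀ x y : X, CBBound (fun a => ι a) (fun T => T) (φ x y) C)
    (h : PositiveType φ) :
    ∃ R : OpValuedRep A H X, NondegenerateRep R.ρ ∧
      (∀ x, ‖R.V x‖ ≤ √(⨆ x : X, cbNorm (fun a => ι a) (fun T => T) (φ x x))) ∧ R.W = R.V ∧
      ∀ x y a, φ x y a = ContinuousLinearMap.adjoint (R.V x) ∘L (R.ρ a) ∘L (R.V y) := by
  have hx : ∀ x y, ∃ C : ℝ, 0 ≤ C ∧ CBBound (fun a => ι a) (fun T => T) (φ x y) C := by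
    obtain ⟨C, hC0, hC⟩ := hbdd
    exact fun x y => ⟨C, hC0, hC x y⟩
  obtain ⟨R, h1, h2, h3, h4⟩ := stine h
    (fun x y => ⟨_, fun a => cbBound_one ι hisom _ _ (cbBound_cbNorm ι _ (hx x y)) a⟩)
    (fun x => cbNorm (fun a => ι a) (fun T => T) (φ x x)) (fun x => cbNorm_nonneg ι _)
    (fun x a => cbBound_one ι hisom _ _ (cbBound_cbNorm ι _ (hx x x)) a)
  exact ⟨R, h1, fun x => (h2 x).trans (Real.sqrt_le_sqrt (le_ciSup (bdd_cb ι φ hbdd) x)), h3, h4⟩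

theorem main_Psi (ι : A →⋆ₙₐ[ℂ] (H →L[ℂ] H)) (hisom : ∀ a : A, ‖ι a‖ = ‖a‖)
    (φ : X → X → (A →ₗ[ℂ] (H →L[ℂ] H)))
    (hbdd : ∃ C : ℝ, 0 ≤ C ∧ ∀ x y : X, CBBound (fun a => ι a) (fun T => T) (φ x y) C)
    (h : PositiveType φ) :
    ∃ Ψ : (lp (fun _ : X => H) 2 →L[ℂ] lp (fun _ : X => H) 2) →ₗ[ℂ]
      (lp (fun _ : X => H) 2 →L[ℂ] lp (fun _ : X => H) 2),
      (∀ (n : ℕ) (M : Matrix (Fin n) (Fin n) _), QPos M → QPos (M.map Ψ)) ∧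
      (∀ (n : ℕ) (M : Matrix (Fin n) (Fin n) _) (c : ℝ), 0 ≤ c → FB M c →
        FB (M.map Ψ) ((⨆ x : X, cbNorm (fun a => ι a) (fun T => T) (φ x x)) * c)) ∧
      (∀ k : X × X → A, (Function.support k).Finite →
          Ψ (TKer ι k) = TOp (fun p => φ p.1 p.2 (k p))) := by
  obtain ⟨R, h1, h2, -, h4⟩ := stine' ι hisom φ hbdd h
  obtain ⟨L, i1, i2, i3, π, J, hπ, hJ, hJπ⟩ := dilation ι (iota_inj ι hisom) R.ρ h1
  obtain ⟨Ψ, p1, p2, p3⟩ := exists_Psi π (fun x => J ∘L R.V x) hπ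
    (⨆ x : X, cbNorm (fun a => ι a) (fun T => T) (φ x x)) (fun x => by
      refine le_trans ?_ (h2 x)
      refine ContinuousLinearMap.opNorm_le_bound _ (norm_nonneg _) fun v => ?_
      rw [ContinuousLinearMap.comp_apply, hJ]
      exact (R.V x).le_opNorm v) (Real.iSup_nonneg fun x => cbNorm_nonneg ι _)
  refine ⟨Ψ, p1, p2, fun k hk => p3 _ _ fun f g => PsiF_TKer ι φ π _ ?_ k hk f g⟩
  intro x y a u v
  simp only [ContinuousLinearMap.comp_apply, hJπ, h4, ContinuousLinearMap.adjoint_inner_right]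

theorem schurBound_of_pos (ι : A →⋆ₙₐ[ℂ] (H →L[ℂ] H)) (hisom : ∀ a : A, ‖ι a‖ = ‖a‖)
    (φ : X → X → (A →ₗ[ℂ] (H →L[ℂ] H)))
    (hbdd : ∃ C : ℝ, 0 ≤ C ∧ ∀ x y : X, CBBound (fun a => ι a) (fun T => T) (φ x y) C)
    (h : PositiveType φ) :
    SchurBound ι φ (⨆ x : X, cbNorm (fun a => ι a) (fun T => T) (φ x x)) ∧ SchurCP ι φ := by
  obtain ⟨Ψ, p1, p2, p3⟩ := main_Psi ι hisom φ hbdd h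
  have e : ∀ (n : ℕ) (k : Fin n → Fin n → (X × X → A)),
      (∀ i j, (Function.support (k i j)).Finite) →
      (Matrix.of fun i j => TOp (fun p => φ p.1 p.2 (k i j p)))
        = (Matrix.of fun i j => TKer ι (k i j)).map Ψ := by
    intro n k hk
    ext1 i j
    exact (p3 _ (hk i j)).symm
  refine ⟨fun n k hk => ?_, fun n k hk hp => ?_⟩
  · rw [e n k hk]
    exact fb_imp_norm _ _ (mul_nonneg (Real.iSup_nonneg fun x => cbNorm_nonneg ι _) (norm_nonneg _))
      (p2 n _ _ (norm_nonneg _) (norm_le_imp_fb _ _ le_rfl))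
  · rw [e n k hk]
    exact qPos_imp_matPos (p1 n _ (matPos_imp_qPos hp))

/-- kernel supported at one point -/
def kAt [DecidableEq X] (x y : X) (a : A) : X × X → A := fun p => if p = (x, y) then a else 0

theorem kAt_supp [DecidableEq X] (x y : X) (a : A) : (Function.support (kAt x y a)).Finite := by
  refine (Set.finite_singleton (x, y)).subset fun p hp => ?_
  by_contra hne
  exact hp (if_neg hne)

theorem inner_TKer_kAt [DecidableEq X] (ι : A →⋆ₙₐ[ℂ] (H →L[ℂ] H)) (x y : X) (a : A)
    (f g : lp (fun _ : X => H) 2) :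
    inner ℂ f (TKer ι (kAt x y a) g) = inner ℂ (f x) (ι a (g y)) := by
  rw [TKer, inner_TOp _ {(x, y)}]
  · simp [kAt]
  · intro p hp
    rw [kAt, if_neg (by simpa using hp), map_zero]

theorem inner_TOp_kAt [DecidableEq X] (φ : X → X → (A →ₗ[ℂ] (H →L[ℂ] H))) (x y : X) (a : A)
    (f g : lp (fun _ : X => H) 2) :
    inner ℂ f (TOp (fun p => φ p.1 p.2 (kAt x y a p)) g) = inner ℂ (f x) (φ x y a (g y)) := by
  rw [inner_TOp _ {(x, y)}]
  · simp [kAt]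
  · intro p hp
    rw [kAt, if_neg (by simpa using hp), map_zero]

theorem qPos_map_gram {n : Type*} [Fintype n] (ι : A →⋆ₙₐ[ℂ] (H →L[ℂ] H)) (N : Matrix n n A) :
    QPos ((Nᴴ * N).map ι) := by
  classical
  rw [map_mul', map_conjT]
  exact qPos_gram _

theorem pos_of_schurCP (ι : A →⋆ₙₐ[ℂ] (H →L[ℂ] H)) (φ : X → X → (A →ₗ[ℂ] (H →L[ℂ] H)))
    (h : SchurCP ι φ) : PositiveType φ := by
  classical
  rintro m x a ⟨N, rfl⟩
  have hp := h m (fun i j => kAt (x i) (x j) ((Nᴴ * N) i j)) (fun i j => kAt_supp _ _ _) (by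
    refine qPos_imp_matPos (fun f => ?_)
    simp only [Matrix.of_apply, inner_TKer_kAt]
    have := qPos_map_gram ι N
    exact this fun i => f i (x i))
  refine qPos_imp_matPos (fun w => ?_)
  have := matPos_imp_qPos hp fun i => lpSingle (x i) (w i)
  simpa only [Matrix.of_apply, inner_TOp_kAt, lpSingle_same] using this

theorem lp_norm_single (x : X) (h : H) : ‖(lpSingle x h : lp (fun _ : X => H) 2)‖ = ‖h‖ := by
  have h1 : ((‖(lpSingle x h : lp (fun _ : X => H) 2)‖ ^ 2 : ℝ)) = ‖h‖ ^ 2 := by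
    have := norm_sum_single {x} (fun _ => h)
    simpa using this
  exact (sq_eq_sq₀ (norm_nonneg _) (norm_nonneg _)).1 h1

theorem cb_le_schur (ι : A →⋆ₙₐ[ℂ] (H →L[ℂ] H)) (φ : X → X → (A →ₗ[ℂ] (H →L[ℂ] H)))
    (C : ℝ) (hC : 0 ≤ C) (h : SchurBound ι φ C) (x : X) :
    CBBound (fun a => ι a) (fun T => T) (φ x x) C := by
  classical
  intro n M
  have h1 := h n (fun i j => kAt x x (M i j)) (fun i j => kAt_supp _ _ _)
  have h2 : ‖matOp (Matrix.of fun i j => TKer ι (kAt x x (M i j)))‖ ≤ ‖matOp (M.map fun a => ι a)‖ := by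
    refine fb_imp_norm _ _ (norm_nonneg _) fun f g => ?_
    simp only [Matrix.of_apply, inner_TKer_kAt]
    refine (norm_le_imp_fb (M.map fun a => ι a) _ le_rfl (fun i => f i x) (fun i => g i x)).trans ?_
    have hn : ∀ f : lp (fun _ : X => H) 2, ‖f x‖ ≤ ‖f‖ := fun f =>
      lp.norm_apply_le_norm (by norm_num) f x
    gcongr
    · exact hn _
    · exact hn _
  refine le_trans ?_ (mul_le_mul_of_nonneg_left h2 hC)
  refine le_trans ?_ h1
  refine fb_imp_norm _ _ (norm_nonneg _) fun w w' => ?_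
  have h3 := norm_le_imp_fb _ _ (le_refl ‖matOp (Matrix.of fun i j =>
    TOp (fun p => φ p.1 p.2 (kAt x x (M i j) p)))‖) (fun i => lpSingle x (w i)) (fun i => lpSingle x (w' i))
  simpa only [Matrix.of_apply, Matrix.map_apply, inner_TOp_kAt, lpSingle_same, lp_norm_single] using h3

theorem pos_of_rep (φ : X → X → (A →ₗ[ℂ] (H →L[ℂ] H))) (R : OpValuedRep A H X)
    (h : ∀ x y a, φ x y a = ContinuousLinearMap.adjoint (R.V x) ∘L (R.ρ a) ∘L (R.V y)) :
    PositiveType φ := by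
  rintro m x a ⟨N, rfl⟩
  refine qPos_imp_matPos (fun w => ?_)
  simp only [Matrix.of_apply, h, ContinuousLinearMap.comp_apply,
    ContinuousLinearMap.adjoint_inner_right]
  exact qPos_map_gram R.ρ N fun i => R.V (x i) (w i)

end P8

/-- **Theorem 2.5.** For a bounded function `φ : X × X → CB(A,B(H))` the following are
equivalent: (i) `φ` is of positive type; (ii) `φ` is a Schur `A`-multiplier, `S_φ` is
completely positive and `‖S_φ‖_cb = sup_x ‖φ(x,x)‖_cb`; (iii) there are a Hilbert space
`K`, a non-degenerate *-representation `ρ : A → B(K)` and a bounded `V : X → B(H,K)`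
with `φ(x,y)(a) = V(x)* ρ(a) V(y)`.  Moreover, in this case the canonical extension of
`S_φ` to `B(ℓ²(X)) ⊗̄ B(H)` is completely positive. -/
theorem positiveType_tfae
    {X : Type*} {H : Type*} [NormedAddCommGroup H] [InnerProductSpace ℂ H]
    [CompleteSpace H] {A : Type*} [NonUnitalCStarAlgebra A]
    (ι : A →⋆ₙₐ[ℂ] (H →L[ℂ] H)) (hisom : ∀ a : A, ‖ι a‖ = ‖a‖)
    (hnd : NondegenerateRep ι)
    (φ : X → X → (A →ₗ[ℂ] (H →L[ℂ] H)))
    (hbdd : ∃ C : ℝ, 0 ≤ C ∧ ∀ x y : X, CBBound (fun a => ι a) (fun T => T) (φ x y) C) :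
    (PositiveType φ ↔
      (IsSchurMultiplier ι φ ∧ SchurCP ι φ ∧
        schurNorm ι φ = ⨆ x : X, cbNorm (fun a => ι a) (fun T => T) (φ x x))) ∧
    (PositiveType φ ↔
      ∃ R : OpValuedRep A H X, NondegenerateRep R.ρ ∧
        (∃ C : ℝ, ∀ x : X, ‖R.V x‖ ≤ C) ∧ R.W = R.V ∧
        ∀ (x y : X) (a : A),
          φ x y a = (ContinuousLinearMap.adjoint (R.V x)) ∘L (R.ρ a) ∘L (R.V y)) ∧
    (PositiveType φ →
      ∃ Ψ : (lp (fun _ : X => H) 2 →L[ℂ] lp (fun _ : X => H) 2) →ₗ[ℂ]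
            (lp (fun _ : X => H) 2 →L[ℂ] lp (fun _ : X => H) 2),
        (∀ k : X × X → A, (Function.support k).Finite →
          Ψ (TKer ι k) = TOp (fun p => φ p.1 p.2 (k p))) ∧
        IsCompletelyPositive Ψ) := by
  refine ⟨⟨fun h => ?_, fun h => pos_of_schurCP ι φ h.2.1⟩, ⟨fun h => ?_, ?_⟩, fun h => ?_⟩
  · obtain ⟨hB, hCP⟩ := schurBound_of_pos ι hisom φ hbdd h
    have h0 : 0 ≤ ⨆ x : X, cbNorm (fun a => ι a) (fun T => T) (φ x x) :=
      Real.iSup_nonneg fun x => cbNorm_nonneg ι _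
    refine ⟨⟨_, h0, hB⟩, hCP, le_antisymm ?_ ?_⟩
    · exact csInf_le ⟨0, fun _ h => h.1⟩ ⟨h0, hB⟩
    · refine Real.iSup_le (fun x => ?_) (Real.sInf_nonneg fun _ h => h.1)
      refine le_csInf ⟨_, h0, hB⟩ fun C hC => ?_
      exact csInf_le ⟨0, fun _ h => h.1⟩ ⟨hC.1, cb_le_schur ι φ C hC.1 hC.2 x⟩
  · obtain ⟨R, h1, h2, h3, h4⟩ := stine' ι hisom φ hbdd h
    exact ⟨R, h1, ⟨_, h2⟩, h3, h4⟩
  · rintro ⟨R, -, -, -, h4⟩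
    exact pos_of_rep φ R h4
  · obtain ⟨Ψ, p1, -, p3⟩ := main_Psi ι hisom φ hbdd h
    exact ⟨Ψ, p3, fun n M hM => qPos_imp_matPos (p1 n M (matPos_imp_qPos hM))⟩

end
end

section
/- Let (A,G,α) be a C*-dynamical system with G discrete, and let T : G×A → A be linear in the second variable. Define F_T : G → CB(A) by F_T(t)(a) = T(t,a). Then T is positive definite in the sense of Bédos-Conti (i.e. for all n ∈ ℕ, s₁,...,s_n ∈ G and a₁,...,a_n ∈ A, the matrix (α_{s_i}(T(s_i⁻¹s_j, α_{s_i⁻¹}(a_i* a_j))))_{i,j} belongs to M_n(A)⁺) if and only if the function N(F_T) : G×G → CB(A) is of positive type. -/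
noncomputable section
open scoped ComplexOrder ENNReal
open Matrix

/-- In a C*-algebra the sum of two elements `b* b` is again of this form. -/
theorem exists_star_mul_self_add {B : Type*} [NonUnitalCStarAlgebra B] (b c : B) :
    ∃ d : B, star b * b + star c * c = star d * d := by
  let _ : PartialOrder B := CStarAlgebra.spectralOrder B
  have _ : StarOrderedRing B := CStarAlgebra.spectralOrderedRing B
  exact CStarAlgebra.nonneg_iff_eq_star_mul_self.1
    (add_nonneg (star_mul_self_nonneg b) (star_mul_self_nonneg c))

/-- Sums of positive matrices are positive. -/
theorem MatPos_sum {A : Type*} [NonUnitalCStarAlgebra A] {m : ℕ} {κ : Type*} (S : Finset κ)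
    (M : κ → Matrix (Fin m) (Fin m) A) (h : ∀ k ∈ S, MatPos (M k)) :
    MatPos (∑ k ∈ S, M k) := by
  let _ : PartialOrder A := CStarAlgebra.spectralOrder A
  have _ : StarOrderedRing A := CStarAlgebra.spectralOrderedRing A
  classical
  induction S using Finset.induction_on with
  | empty => exact ⟨0, by simp⟩
  | insert k S hk ih =>
    rw [Finset.sum_insert hk]
    obtain ⟨b, hb⟩ := h k (Finset.mem_insert_self k S)
    obtain ⟨c, hc⟩ := ih fun j hj => h j (Finset.mem_insert_of_mem hj)
    obtain ⟨d, hd⟩ := exists_star_mul_self_add (CStarMatrix.ofMatrix b) (CStarMatrix.ofMatrix c)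
    rw [hb, hc]
    exact ⟨CStarMatrix.ofMatrix.symm d, hd⟩

/-- The rank-one matrix `(a_i* a_j)` is positive. -/
theorem MatPos_rankOne {A : Type*} [NonUnitalCStarAlgebra A] {n : ℕ} (a : Fin n → A) :
    MatPos (Matrix.of fun i j : Fin n => star (a i) * a j) := by
  cases n with
  | zero => exact ⟨0, by ext i; exact i.elim0⟩
  | succ n =>
    refine ⟨Matrix.of fun k j => if k = 0 then a j else 0, ?_⟩
    ext i j
    simp [Matrix.mul_apply, Matrix.conjTranspose_apply]

/-- **Bédos–Conti positive definiteness.** For `T : G × A → A`, linear in the second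
variable (encoded as `T : G → (A →ₗ[ℂ] A)`, so that `F_T = T`), `T` is positive
definite in the sense of Bédos-Conti if and only if `N(F_T)` is of positive type. -/
theorem BCPosDef_iff_NF_positiveType
    {A : Type*} [NonUnitalCStarAlgebra A] {G : Type*} [Group G]
    (α : G → A ≃⋆ₐ[ℂ] A) (hα : IsAction α)
    (T : G → (A →ₗ[ℂ] A)) :
    (∀ (n : ℕ) (s : Fin n → G) (a : Fin n → A),
      MatPos (Matrix.of fun i j : Fin n =>
        α (s i) (T ((s i)⁻¹ * s j) (α (s i)⁻¹ (star (a i) * a j))))) ↔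
    PositiveTypeA (NF α T) := by
  constructor
  · intro h m x a ha
    obtain ⟨N, rfl⟩ := ha
    have hs : (Matrix.of fun p q => NF α T (x p) (x q) ((Nᴴ * N) p q)) =
        ∑ k, Matrix.of fun p q => NF α T (x p) (x q) (star (N k p) * N k q) := by
      ext p q
      rw [Matrix.sum_apply]
      simp only [Matrix.of_apply, Matrix.mul_apply, Matrix.conjTranspose_apply, map_sum]
    rw [hs]
    refine MatPos_sum _ _ fun k _ => ?_
    have := h m (fun i => (x i)⁻¹) (fun i => N k i)
    simp only [inv_inv] at this
    exact this
  · intro h n s a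
    have := h n (fun i => (s i)⁻¹) _ (MatPos_rankOne a)
    simp only [NF, inv_inv] at this
    exact this

end
end
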